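/- Let n be a positive integer, let p > 1 and let ω satisfy a_p ≤ ω < ω_p, where ω_p = p/(p+1)² and a_p = p(7p-5)/(4(p+1)(2p-1)²). Then the boundary value problem u''(r) + ((n-1)/r)·u'(r) − ω·u(r) + u(r)^p − u(r)^{2p-1} = 0 for r > 0, u'(0) = 0, lim_{r→∞} u(r) = 0, has at most one positive solution: if u₁ and u₂ are both functions from [0,∞) to ℝ, continuous on [0,∞), twice differentiable on (0,∞), with (one-sided) derivative 0 at r = 0, everywhere positive, tending to 0 at infinity, and satisfying the equation for all r > 0, then u₁ = u₂. -/

import Mathlib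

open Real Set Filter Topology

/-- `u : ℝ → ℝ` (viewed as a function on `[0,∞)`) is a positive solution of problem (b):
continuous on `[0,∞)`, twice differentiable on `(0,∞)`, satisfies the ODE
`u'' + ((n-1)/r) u' - ω u + u^p - u^(2p-1) = 0` for `r > 0`, has one-sided derivative `0`
at `r = 0`, is strictly positive on `[0,∞)`, and tends to `0` at infinity. -/
def IsPositiveSolution (n : ℕ) (p ω : ℝ) (u : ℝ → ℝ) : Prop :=
  ContinuousOn u (Set.Ici 0) ∧
  (∀ r > (0 : ℝ), DifferentiableAt ℝ u r ∧ DifferentiableAt ℝ (deriv u) r) ∧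
  (∀ r > (0 : ℝ), deriv (deriv u) r + ((n : ℝ) - 1) / r * deriv u r
      - ω * u r + u r ^ p - u r ^ (2 * p - 1) = 0) ∧
  HasDerivWithinAt u 0 (Set.Ici 0) 0 ∧
  (∀ r ≥ (0 : ℝ), 0 < u r) ∧
  Filter.Tendsto u Filter.atTop (nhds 0)

/-!
A ground state decreases strictly, so it can be parametrized by its height `z = u(r)`. Two distinct
ground states are ordered near infinity, say `v < u`. They must cross: otherwise, at equal height,
`u` is at most as steep as `v`, and letting the height tend to `v(0)`, where `v` is flat, forces
`u(0) = v(0)`, hence `u = v`. At the last crossing uniqueness for the initial value problem gives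
`v' < u'`, which is impossible. Let `F` be the primitive of the nonlinearity `f` and `β` its smaller
positive zero.

* If the crossing takes place at a height at most `β`, compare the weighted energies
  `r ^ (2 * (n - 1)) * (u' ^ 2 / 2 + F(u))` as functions of the height: their derivatives carry the
  factor `-F ≥ 0`, and the one of `u` grows faster, so that `u' ≤ v'` at the crossing.
* If it takes place above `β`, the Wronskian of `u - β` and `v - β` increases where
  `β < u ≤ v`, because `f(z) / (z - β)` decreases for `z > β`; this again gives `u' ≤ v'`. The
  quotient decreases because `f(β) ≥ 0` and `f` is concave on `[β, ∞)`, which is where `a_p ≤ ω`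
  enters.
-/

section Calculus

variable {g g' : ℝ → ℝ} {a b : ℝ}

lemma monotoneOn_of_hasDerivAt_nonneg {D : Set ℝ} (hD : Convex ℝ D)
    (hg : ∀ x ∈ D, HasDerivAt g (g' x) x) (hg' : ∀ x ∈ D, 0 ≤ g' x) : MonotoneOn g D :=
  monotoneOn_of_hasDerivWithinAt_nonneg hD
    (fun x hx => (hg x hx).continuousAt.continuousWithinAt)
    (fun x hx => (hg x (interior_subset hx)).hasDerivWithinAt)
    (fun x hx => hg' x (interior_subset hx))

lemma antitoneOn_of_hasDerivAt_nonpos {D : Set ℝ} (hD : Convex ℝ D)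
    (hg : ∀ x ∈ D, HasDerivAt g (g' x) x) (hg' : ∀ x ∈ D, g' x ≤ 0) : AntitoneOn g D :=
  antitoneOn_of_hasDerivWithinAt_nonpos hD
    (fun x hx => (hg x hx).continuousAt.continuousWithinAt)
    (fun x hx => (hg x (interior_subset hx)).hasDerivWithinAt)
    (fun x hx => hg' x (interior_subset hx))

lemma nonpos_of_hasDerivAt_of_eventually_nonpos {m : ℝ} (hg : HasDerivAt g m a) (ha : g a = 0)
    (hneg : ∀ᶠ x in 𝓝[>] a, g x ≤ 0) : m ≤ 0 := by
  have hslope : Tendsto (slope g a) (𝓝[>] a) (𝓝 m) :=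
    (hasDerivWithinAt_iff_tendsto_slope' self_notMem_Ioi).1 hg.hasDerivWithinAt
  refine le_of_tendsto hslope ?_
  filter_upwards [hneg, self_mem_nhdsWithin] with x hx hax
  rw [slope_def_field, ha, sub_zero]
  exact div_nonpos_of_nonpos_of_nonneg hx (sub_pos.2 hax).le

lemma eventually_nhdsLT_neg_of_hasDerivAt_pos {m : ℝ} (hg : HasDerivAt g m a) (ha : g a = 0)
    (hm : 0 < m) : ∀ᶠ x in 𝓝[<] a, g x < 0 := by
  filter_upwards [(eventually_nhdsWithin_sign_eq_of_deriv_pos (hm.trans_eq hg.deriv.symm)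
    ha).filter_mono nhdsWithin_le_nhds, self_mem_nhdsWithin] with x hx hxa
  rwa [sign_neg (sub_neg.2 hxa), sign_eq_neg_one_iff] at hx

lemma nonneg_of_isMinOn_Icc_right {m : ℝ} (hab : a < b)
    (hg : ∀ x ∈ Ioc a b, HasDerivAt g (g' x) x) (hg' : HasDerivAt g' m b) (hb : g' b = 0)
    (hmin : IsMinOn g (Icc a b) b) : 0 ≤ m := by
  by_contra! hm
  have hpos : ∀ᶠ x in 𝓝[<] b, 0 < g' x :=
    (eventually_nhdsLT_neg_of_hasDerivAt_pos hg'.neg (by simp [hb]) (neg_pos.2 hm)).mono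
      fun x hx => neg_neg_iff_pos.1 hx
  obtain ⟨c, hc, hcpos⟩ := (mem_nhdsLT_iff_exists_mem_Ico_Ioo_subset hab).1 hpos
  obtain ⟨x, hcx, hxb⟩ := exists_between hc.2
  have hx : x ∈ Ioc a b := ⟨hc.1.trans_lt hcx, hxb.le⟩
  have hmono : StrictMonoOn g (Icc x b) := strictMonoOn_of_hasDerivWithinAt_pos (convex_Icc x b)
    (fun y hy => (hg y ⟨hx.1.trans_le hy.1, hy.2⟩).continuousAt.continuousWithinAt)
    (fun y hy => (hg y ⟨hx.1.trans_le (interior_subset hy).1,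
      (interior_subset hy).2⟩).hasDerivWithinAt)
    (fun y hy => by
      rw [interior_Icc] at hy
      exact hcpos ⟨hcx.trans hy.1, hy.2⟩)
  exact (hmono (left_mem_Icc.2 hxb.le) (right_mem_Icc.2 hxb.le) hxb).not_ge
    (hmin (Ioc_subset_Icc_self hx))

lemma exists_forall_le_of_continuousOn_Ioc {C : ℝ} (hg : ContinuousOn g (Ioc a b))
    (hC : ∀ᶠ x in 𝓝[>] a, g x ≤ C) : ∃ K, ∀ x ∈ Ioc a b, g x ≤ K := by
  obtain ⟨c, hc, hgc⟩ := mem_nhdsGT_iff_exists_Ioc_subset.1 hC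
  obtain ⟨K, hK⟩ := (isCompact_Icc.image_of_continuousOn
    (hg.mono fun x (hx : x ∈ Icc c b) => ⟨hc.trans_le hx.1, hx.2⟩)).bddAbove
  refine ⟨max C K, fun x hx => ?_⟩
  rcases le_total x c with hxc | hcx
  · exact (hgc ⟨hx.1, hxc⟩).trans (le_max_left C K)
  · exact (hK (mem_image_of_mem g ⟨hcx, hx.2⟩)).trans (le_max_right C K)

lemma exists_last_zero (hab : a ≤ b) (hg : ContinuousOn g (Icc a b)) (ha : 0 ≤ g a)
    (hb : g b < 0) : ∃ c ∈ Ico a b, g c = 0 ∧ ∀ x ∈ Ioc c b, g x < 0 := by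
  have hcompact : IsCompact (Icc a b ∩ g ⁻¹' Ici 0) :=
    isCompact_Icc.of_isClosed_subset (hg.preimage_isClosed_of_isClosed isClosed_Icc isClosed_Ici)
      inter_subset_left
  obtain ⟨c, ⟨hc, hgc⟩, hmax⟩ := hcompact.exists_isGreatest ⟨a, left_mem_Icc.2 hab, ha⟩
  have hcb : c < b := hc.2.lt_of_ne fun h => (h ▸ hb).not_ge hgc
  have hneg : ∀ x ∈ Ioc c b, g x < 0 := fun x hx => not_le.1 fun hgx =>
    hx.1.not_ge (hmax ⟨⟨hc.1.trans hx.1.le, hx.2⟩, hgx⟩)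
  obtain ⟨d, hd, hgd⟩ := intermediate_value_Icc' hcb.le
    (hg.mono (Icc_subset_Icc_left hc.1)) ⟨hb.le, hgc⟩
  obtain rfl : c = d := hd.1.eq_of_not_lt fun h => (hneg d ⟨h, hd.2⟩).ne hgd
  exact ⟨c, ⟨hc.1, hcb⟩, hgd, hneg⟩

lemma exists_last_zero_of_hasDerivAt_pos {m : ℝ} (hab : a < b) (hg : ContinuousOn g (Icc a b))
    (ha : 0 ≤ g a) (hb : g b = 0) (hderiv : HasDerivAt g m b) (hm : 0 < m) :
    ∃ c ∈ Ico a b, g c = 0 ∧ ∀ x ∈ Ioo c b, g x < 0 := by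
  obtain ⟨d, hd, hneg⟩ := (mem_nhdsLT_iff_exists_mem_Ico_Ioo_subset hab).1
    (eventually_nhdsLT_neg_of_hasDerivAt_pos hderiv hb hm)
  obtain ⟨y, hdy, hyb⟩ := exists_between hd.2
  have hay : a ≤ y := hd.1.trans hdy.le
  obtain ⟨c, hc, hgc, hcneg⟩ := exists_last_zero hay (hg.mono (Icc_subset_Icc_right hyb.le)) ha
    (hneg ⟨hdy, hyb⟩)
  refine ⟨c, ⟨hc.1, hc.2.trans hyb⟩, hgc, fun x hx => ?_⟩
  rcases le_or_gt x y with hxy | hyx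
  · exact hcneg x ⟨hx.1, hxy⟩
  · exact hneg ⟨hdy.trans hyx, hx.2⟩

lemma exists_previous_crossing {h : ℝ → ℝ} (hab : a < b)
    (hg : ∀ x ∈ Icc a b, DifferentiableAt ℝ g x) (hh : ∀ x ∈ Icc a b, DifferentiableAt ℝ h x)
    (ha : h a ≤ g a) (hb : g b = h b) (hderiv : deriv h b < deriv g b) :
    ∃ c ∈ Ico a b, g c = h c ∧ deriv g c ≤ deriv h c ∧ ∀ x ∈ Icc c b, g x ≤ h x := by
  have hsub (x : ℝ) (hx : x ∈ Icc a b) :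
      HasDerivAt (fun x => g x - h x) (deriv g x - deriv h x) x :=
    (hg x hx).hasDerivAt.sub (hh x hx).hasDerivAt
  obtain ⟨c, hc, hc0, hneg⟩ := exists_last_zero_of_hasDerivAt_pos hab
    (fun x hx => (hsub x hx).continuousAt.continuousWithinAt) (sub_nonneg.2 ha)
    (sub_eq_zero.2 hb) (hsub b (right_mem_Icc.2 hab.le)) (sub_pos.2 hderiv)
  have hgh : g c = h c := sub_eq_zero.1 hc0
  refine ⟨c, hc, hgh, sub_nonpos.1 (nonpos_of_hasDerivAt_of_eventually_nonpos
    (hsub c (Ico_subset_Icc_self hc)) hc0 ?_), fun x hx => ?_⟩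
  · filter_upwards [Ioo_mem_nhdsGT hc.2] with x hx using (hneg x hx).le
  · rcases hx.1.eq_or_lt with rfl | hcx
    · exact hgh.le
    rcases hx.2.eq_or_lt with rfl | hxb
    · exact hb.le
    exact (sub_neg.1 (hneg x ⟨hcx, hxb⟩)).le

lemma exists_last_crossing {h : ℝ → ℝ} (hg : ∀ x ≥ a, DifferentiableAt ℝ g x)
    (hh : ∀ x ≥ a, DifferentiableAt ℝ h x) (ha : g a ≤ h a) (hlt : ∀ᶠ x in atTop, h x < g x) :
    ∃ c ≥ a, g c = h c ∧ deriv h c ≤ deriv g c ∧ ∀ x ≥ c, h x ≤ g x := by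
  obtain ⟨R, hR⟩ := eventually_atTop.1 (hlt.and (eventually_ge_atTop a))
  have hsub (x : ℝ) (hx : a ≤ x) : HasDerivAt (fun x => h x - g x) (deriv h x - deriv g x) x :=
    (hh x hx).hasDerivAt.sub (hg x hx).hasDerivAt
  obtain ⟨c, hc, hc0, hneg⟩ := exists_last_zero (hR R le_rfl).2
    (fun x hx => (hsub x hx.1).continuousAt.continuousWithinAt) (sub_nonneg.2 ha)
    (sub_neg.2 (hR R le_rfl).1)
  have hhg : ∀ x > c, h x < g x := fun x hx => (le_or_gt x R).elim
    (fun hxR => sub_neg.1 (hneg x ⟨hx, hxR⟩)) fun hRx => (hR x hRx.le).1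
  have heq : g c = h c := (sub_eq_zero.1 hc0).symm
  refine ⟨c, hc.1, heq, ?_,
    fun x hx => hx.eq_or_lt.elim (fun h => h ▸ heq.ge) fun h => (hhg x h).le⟩
  exact sub_nonpos.1 (nonpos_of_hasDerivAt_of_eventually_nonpos (hsub c hc.1) hc0
    (eventually_nhdsWithin_of_forall fun x hx => sub_nonpos.2 (hhg x hx).le))

/- The bound is only assumed where `g` is positive, so `g` may decrease arbitrarily fast elsewhere;
`ε * exp (M * (x - a))` is a barrier which `g` cannot cross upwards. -/
lemma nonpos_of_deriv_le_mul_of_tendsto_zero {K : ℝ} (hab : a < b)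
    (hg : ∀ x ∈ Ioc a b, HasDerivAt g (g' x) x)
    (hbound : ∀ x ∈ Ioc a b, 0 < g x → g' x ≤ K * g x)
    (hlim : Tendsto g (𝓝[>] a) (𝓝 0)) : g b ≤ 0 := by
  by_contra! hb
  set M := |K| + 1
  have hM : K < M := (le_abs_self K).trans_lt (lt_add_one _)
  set ε := g b / 2 * exp (-(M * (b - a))) with hε
  have hε0 : 0 < ε := by positivity
  obtain ⟨c, hgc, hc⟩ := ((hlim.eventually_le_const hε0).and (Ioo_mem_nhdsGT hab)).exists
  have hB (x : ℝ) : HasDerivAt (fun x => ε * exp (M * (x - a))) (M * (ε * exp (M * (x - a)))) x :=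
    ((((hasDerivAt_id x).sub_const a).const_mul M).exp.const_mul ε).congr_deriv (by simp; ring)
  have hstart : g c ≤ ε * exp (M * (c - a)) :=
    hgc.trans (le_mul_of_one_le_right hε0.le
      (one_le_exp (mul_nonneg (by positivity) (sub_nonneg.2 hc.1.le))))
  have hbarrier : g b ≤ ε * exp (M * (b - a)) :=
    image_le_of_deriv_right_lt_deriv_boundary (a := c) (b := b)
      (fun x hx => (hg x ⟨hc.1.trans_le hx.1, hx.2⟩).continuousAt.continuousWithinAt)
      (fun x hx => (hg x ⟨hc.1.trans_le hx.1, hx.2.le⟩).hasDerivWithinAt) hstart hB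
      (fun x hx hgx => by
        have hgpos : 0 < g x := hgx ▸ by positivity
        calc g' x ≤ K * g x := hbound x ⟨hc.1.trans_le hx.1, hx.2.le⟩ hgpos
          _ < M * g x := mul_lt_mul_of_pos_right hM hgpos
          _ = _ := by rw [hgx])
      (right_mem_Icc.2 hc.2.le)
  have hhalf : ε * exp (M * (b - a)) = g b / 2 := by
    rw [hε, mul_assoc, ← exp_add, neg_add_cancel, exp_zero, mul_one]
  linarith

lemma exists_tendsto_deriv_of_hasDerivWithinAt {m : ℝ}
    (hg : ∀ x > a, DifferentiableAt ℝ g x) (ha : HasDerivWithinAt g m (Ici a) a) :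
    ∃ c : ℝ → ℝ, Tendsto c (𝓝[>] a) (𝓝[>] a) ∧
      Tendsto (fun x => deriv g (c x)) (𝓝[>] a) (𝓝 m) := by
  have hmvt : ∀ x, a < x → ∃ c ∈ Ioo a x, deriv g c = slope g a x := fun x hx => by
    rw [slope_def_field]
    refine exists_deriv_eq_slope g hx (fun y hy => ?_)
      fun y hy => (hg y hy.1).differentiableWithinAt
    rcases hy.1.eq_or_lt with rfl | hay
    · exact ha.continuousWithinAt.mono Icc_subset_Ici_self
    · exact (hg y hay).continuousAt.continuousWithinAt
  choose! c hc hslope using hmvt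
  refine ⟨c, tendsto_nhdsWithin_iff.2 ⟨?_, ?_⟩, ?_⟩
  · exact tendsto_of_tendsto_of_tendsto_of_le_of_le' tendsto_const_nhds nhdsWithin_le_nhds
      (eventually_nhdsWithin_of_forall fun x hx => (hc x hx).1.le)
      (eventually_nhdsWithin_of_forall fun x hx => (hc x hx).2.le)
  · exact eventually_nhdsWithin_of_forall fun x hx => (hc x hx).1
  · refine Tendsto.congr' (eventually_nhdsWithin_of_forall fun x hx => (hslope x hx).symm) ?_
    exact (hasDerivWithinAt_iff_tendsto_slope' self_notMem_Ioi).1 (ha.mono Ioi_subset_Ici_self)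

lemma antitoneOn_div_sub_of_concaveOn (hg : ConcaveOn ℝ (Ici a) g)
    (ha : 0 ≤ g a) : AntitoneOn (fun z => g z / (z - a)) (Ioi a) := fun x hx y hy hxy => by
  have hslope : slope g a y ≤ slope g a x :=
    hg.antitoneOn_slope_gt self_mem_Ici ⟨hx.out.le, hx⟩ ⟨hy.out.le, hy⟩ hxy
  have hsplit (z : ℝ) : g z / (z - a) = slope g a z + g a / (z - a) := by
    rw [slope_def_field, ← add_div, sub_add_cancel]
  simp only [hsplit]
  exact add_le_add hslope
    (div_le_div_of_nonneg_left ha (sub_pos.2 hx) (sub_le_sub_right hxy a))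

end Calculus

/-! ### Radial solutions and the initial value problem -/

/-- `u` is a positive solution on `(0, ∞)` of the radial equation `u'' + (k / r) u' + f(u) = 0`,
which is `Δu + f(u) = 0` for radial functions in dimension `k + 1`. The first derivative
is `deriv u`. -/
structure IsRadialSolution (k : ℕ) (f u : ℝ → ℝ) : Prop where
  pos : ∀ r > 0, 0 < u r
  hasDerivAt : ∀ r > 0, HasDerivAt u (deriv u r) r
  hasDerivAt_deriv : ∀ r > 0, HasDerivAt (deriv u) (-(k / r) * deriv u r - f (u r)) r

/-- The mechanical energy `u'² / 2 + F(u)` of `u`, where `F` is a primitive of the nonlinearity; it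
decreases along radial solutions. -/
noncomputable def energy (F u : ℝ → ℝ) (r : ℝ) : ℝ := deriv u r ^ 2 / 2 + F (u r)

/-- The squared distance between the Cauchy data `(u, u')` and `(v, v')` at `r`, to which Grönwall's
argument is applied. -/
noncomputable def cauchyGap (u v : ℝ → ℝ) (r : ℝ) : ℝ :=
  (u r - v r) ^ 2 + (deriv u r - deriv v r) ^ 2

lemma eq_of_cauchyGap_nonpos {u v : ℝ → ℝ} {r : ℝ} (h : cauchyGap u v r ≤ 0) : u r = v r := by
  unfold cauchyGap at h
  nlinarith [sq_nonneg (u r - v r), sq_nonneg (deriv u r - deriv v r)]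

lemma exists_abs_sub_le_mul_abs_sub {f u v : ℝ → ℝ} {a b : ℝ}
    (hf : LocallyLipschitzOn (Ioi 0) f) (hu : ContinuousOn u (Icc a b))
    (hv : ContinuousOn v (Icc a b)) (hu0 : ∀ r ∈ Icc a b, 0 < u r)
    (hv0 : ∀ r ∈ Icc a b, 0 < v r) :
    ∃ L ≥ 0, ∀ r ∈ Icc a b, |f (u r) - f (v r)| ≤ L * |u r - v r| := by
  have hcompact : IsCompact (u '' Icc a b ∪ v '' Icc a b) :=
    (isCompact_Icc.image_of_continuousOn hu).union (isCompact_Icc.image_of_continuousOn hv)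
  obtain ⟨L, hL⟩ := (hf.mono (union_subset (image_subset_iff.2 hu0)
    (image_subset_iff.2 hv0))).exists_lipschitzOnWith_of_compact hcompact
  exact ⟨L, L.coe_nonneg, fun r hr => hL.dist_le_mul _ (.inl (mem_image_of_mem u hr)) _
    (.inr (mem_image_of_mem v hr))⟩

lemma abs_two_mul_sub_two_mul_le {x y d L : ℝ} (hL : 0 ≤ L) (hd : |d| ≤ L * |x|) :
    |2 * x * y - 2 * d * y| ≤ (1 + L) * (x ^ 2 + y ^ 2) := by
  have hyoung : 2 * (|x| * |y|) ≤ x ^ 2 + y ^ 2 := by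
    nlinarith [sq_nonneg (|x| - |y|), sq_abs x, sq_abs y]
  calc |2 * x * y - 2 * d * y| ≤ |2 * x * y| + |2 * d * y| := abs_sub _ _
    _ = 2 * (|x| * |y|) + 2 * (|d| * |y|) := by simp only [abs_mul, abs_two, mul_assoc]
    _ ≤ 2 * (|x| * |y|) + 2 * (L * |x| * |y|) := by gcongr
    _ = (1 + L) * (2 * (|x| * |y|)) := by ring
    _ ≤ (1 + L) * (x ^ 2 + y ^ 2) := by gcongr

namespace IsRadialSolution

variable {k : ℕ} {f F u v : ℝ → ℝ} {a b r δ : ℝ}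

lemma differentiableAt (hu : IsRadialSolution k f u) (hr : 0 < r) : DifferentiableAt ℝ u r :=
  (hu.hasDerivAt r hr).differentiableAt

lemma continuousOn (hu : IsRadialSolution k f u) : ContinuousOn u (Ioi 0) := fun r hr =>
  (hu.hasDerivAt r hr).continuousAt.continuousWithinAt

lemma hasDerivAt_pow_mul_deriv (hu : IsRadialSolution k f u) (hr : 0 < r) :
    HasDerivAt (fun s => s ^ k * deriv u s) (-(r ^ k * f (u r))) r := by
  refine ((hasDerivAt_pow k r).mul (hu.hasDerivAt_deriv r hr)).congr_deriv ?_
  rcases k with _ | k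
  · simp
  · simp only [Nat.add_sub_cancel, pow_succ]
    field_simp
    ring

lemma hasDerivAt_energy (hu : IsRadialSolution k f u) (hF : ∀ z > 0, HasDerivAt F (f z) z)
    (hr : 0 < r) : HasDerivAt (energy F u) (-(k / r) * deriv u r ^ 2) r := by
  have hkin := ((hu.hasDerivAt_deriv r hr).pow 2).div_const 2
  have hpot := (hF (u r) (hu.pos r hr)).comp r (hu.hasDerivAt r hr)
  exact (hkin.add hpot).congr_deriv (by push_cast; ring)

lemma antitoneOn_energy (hu : IsRadialSolution k f u) (hF : ∀ z > 0, HasDerivAt F (f z) z) :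
    AntitoneOn (energy F u) (Ioi 0) :=
  antitoneOn_of_hasDerivAt_nonpos (convex_Ioi 0) (fun _ hr => hu.hasDerivAt_energy hF hr)
    fun r hr => by
      have : 0 ≤ k / r := div_nonneg k.cast_nonneg (mem_Ioi.1 hr).le
      nlinarith [sq_nonneg (deriv u r)]

lemma hasDerivAt_cauchyGap (hu : IsRadialSolution k f u) (hv : IsRadialSolution k f v)
    (hr : 0 < r) :
    HasDerivAt (cauchyGap u v) (2 * (u r - v r) * (deriv u r - deriv v r)
      - 2 * (k / r) * (deriv u r - deriv v r) ^ 2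
      - 2 * (f (u r) - f (v r)) * (deriv u r - deriv v r)) r :=
  ((((hu.hasDerivAt r hr).sub (hv.hasDerivAt r hr)).pow 2).add
    (((hu.hasDerivAt_deriv r hr).sub (hv.hasDerivAt_deriv r hr)).pow 2)).congr_deriv
    (by simp only [Pi.sub_apply]; push_cast; ring)

/- The damping term `-(k / r) u'` only decreases the gap, so `a = 0` is allowed. -/
lemma eq_of_tendsto_cauchyGap (hu : IsRadialSolution k f u) (hv : IsRadialSolution k f v)
    (hf : LocallyLipschitzOn (Ioi 0) f) (ha : 0 ≤ a) (hab : a < b)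
    (huc : ContinuousOn u (Icc a b)) (hvc : ContinuousOn v (Icc a b)) (hua : 0 < u a)
    (hva : 0 < v a) (hgap : Tendsto (cauchyGap u v) (𝓝[>] a) (𝓝 0)) : u b = v b := by
  have hpos {w : ℝ → ℝ} (hw : IsRadialSolution k f w) (hwa : 0 < w a) : ∀ r ∈ Icc a b, 0 < w r :=
    fun r hr => hr.1.eq_or_lt.elim (fun h => h ▸ hwa) fun h => hw.pos r (ha.trans_lt h)
  obtain ⟨L, hL0, hL⟩ := exists_abs_sub_le_mul_abs_sub hf huc hvc (hpos hu hua) (hpos hv hva)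
  refine eq_of_cauchyGap_nonpos (nonpos_of_deriv_le_mul_of_tendsto_zero (K := 1 + L) hab
    (fun r hr => hu.hasDerivAt_cauchyGap hv (ha.trans_lt hr.1)) (fun r hr _ => ?_) hgap)
  have hbound := (abs_le.1 (abs_two_mul_sub_two_mul_le (y := deriv u r - deriv v r) hL0
    (hL r (Ioc_subset_Icc_self hr)))).2
  have hdamp : 0 ≤ k / r * (deriv u r - deriv v r) ^ 2 :=
    mul_nonneg (div_nonneg k.cast_nonneg (ha.trans hr.1.le)) (sq_nonneg _)
  unfold cauchyGap
  linarith

lemma eq_of_cauchyGap_eq_zero (hu : IsRadialSolution k f u) (hv : IsRadialSolution k f v)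
    (hf : LocallyLipschitzOn (Ioi 0) f) (ha : 0 < a) (hab : a < b)
    (hgap : cauchyGap u v b = 0) : u a = v a := by
  have hIcc : Icc a b ⊆ Ioi 0 := fun r hr => ha.trans_le hr.1
  obtain ⟨L, hL0, hL⟩ := exists_abs_sub_le_mul_abs_sub hf (hu.continuousOn.mono hIcc)
    (hv.continuousOn.mono hIcc) (fun r hr => hu.pos r (hIcc hr)) fun r hr => hv.pos r (hIcc hr)
  set K := 1 + L + 2 * (k / a)
  have hmono : MonotoneOn (fun r => cauchyGap u v r * exp (K * r)) (Icc a b) := by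
    refine monotoneOn_of_hasDerivAt_nonneg (convex_Icc a b) (fun r hr =>
      (hu.hasDerivAt_cauchyGap hv (hIcc hr)).mul ((hasDerivAt_id r).const_mul K).exp)
      fun r hr => ?_
    have hbound := (abs_le.1 (abs_two_mul_sub_two_mul_le (y := deriv u r - deriv v r) hL0
      (hL r hr))).1
    have hdamp : k / r * (deriv u r - deriv v r) ^ 2 ≤ k / a * cauchyGap u v r :=
      mul_le_mul (div_le_div_of_nonneg_left k.cast_nonneg ha hr.1)
        (le_add_of_nonneg_left (sq_nonneg _)) (sq_nonneg _) (by positivity)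
    change -((1 + L) * cauchyGap u v r) ≤ _ at hbound
    calc 0 ≤ exp (K * r) * (2 * (u r - v r) * (deriv u r - deriv v r)
          - 2 * (k / r) * (deriv u r - deriv v r) ^ 2
          - 2 * (f (u r) - f (v r)) * (deriv u r - deriv v r) + K * cauchyGap u v r) :=
          mul_nonneg (exp_pos _).le (by simp only [K]; linarith)
      _ = _ := by simp only [id, mul_one]; ring
  have hle := hmono (left_mem_Icc.2 hab.le) (right_mem_Icc.2 hab.le) hab.le
  simp only [hgap, zero_mul] at hle
  exact eq_of_cauchyGap_nonpos (nonpos_of_mul_nonpos_left hle (exp_pos _))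

theorem eqOn_of_eq_of_deriv_eq (hu : IsRadialSolution k f u) (hv : IsRadialSolution k f v)
    (hf : LocallyLipschitzOn (Ioi 0) f) (ha : 0 < a) (heq : u a = v a)
    (hderiv : deriv u a = deriv v a) : EqOn u v (Ioi 0) := by
  have hgap : cauchyGap u v a = 0 := by simp [cauchyGap, heq, hderiv]
  intro b hb
  rcases lt_trichotomy b a with hba | rfl | hab
  · exact hu.eq_of_cauchyGap_eq_zero hv hf hb hba hgap
  · exact heq
  · have hIcc : Icc a b ⊆ Ioi 0 := fun r hr => ha.trans_le hr.1
    exact hu.eq_of_tendsto_cauchyGap hv hf ha.le hab (hu.continuousOn.mono hIcc)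
      (hv.continuousOn.mono hIcc) (hu.pos a ha) (hv.pos a ha)
      (hgap ▸ (hu.hasDerivAt_cauchyGap hv ha).continuousAt.tendsto.mono_left nhdsWithin_le_nhds)

lemma monotoneOn_pow_mul_deriv_sub_mul_sub (hu : IsRadialSolution k f u)
    (hv : IsRadialSolution k f v) (hf : AntitoneOn f (Ioo 0 δ)) (ha : 0 < a)
    (huδ : ∀ r ≥ a, u r < δ) (hvδ : ∀ r ≥ a, v r < δ) :
    MonotoneOn (fun r => r ^ k * (deriv u r - deriv v r) * (u r - v r)) (Ici a) := by
  have hpos {r : ℝ} (hr : r ∈ Ici a) : 0 < r := ha.trans_le hr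
  simp only [mul_sub (_ ^ k)]
  refine monotoneOn_of_hasDerivAt_nonneg (convex_Ici a) (fun r hr =>
    ((hu.hasDerivAt_pow_mul_deriv (hpos hr)).sub (hv.hasDerivAt_pow_mul_deriv (hpos hr))).mul
      ((hu.hasDerivAt r (hpos hr)).sub (hv.hasDerivAt r (hpos hr)))) fun r hr => ?_
  have hanti : (f (u r) - f (v r)) * (u r - v r) ≤ 0 := by
    have hur : u r ∈ Ioo 0 δ := ⟨hu.pos r (hpos hr), huδ r hr⟩
    have hvr : v r ∈ Ioo 0 δ := ⟨hv.pos r (hpos hr), hvδ r hr⟩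
    rcases le_total (u r) (v r) with hle | hle
    · exact mul_nonpos_of_nonneg_of_nonpos (sub_nonneg.2 (hf hur hvr hle)) (sub_nonpos.2 hle)
    · exact mul_nonpos_of_nonpos_of_nonneg (sub_nonpos.2 (hf hvr hur hle)) (sub_nonneg.2 hle)
  calc 0 ≤ r ^ k * ((deriv u r - deriv v r) ^ 2 - (f (u r) - f (v r)) * (u r - v r)) :=
        mul_nonneg (pow_pos (hpos hr) k).le (by linarith [sq_nonneg (deriv u r - deriv v r)])
    _ = _ := by simp only [Pi.sub_apply]; ring

end IsRadialSolution

/-! ### Monotonicity and decay of ground states -/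

/-- A positive solution of the radial equation on `[0, ∞)` which is regular at the origin and decays
at infinity. -/
structure IsGroundState (k : ℕ) (f u : ℝ → ℝ) : Prop extends IsRadialSolution k f u where
  pos_zero : 0 < u 0
  hasDerivWithinAt_zero : HasDerivWithinAt u 0 (Ici 0) 0
  tendsto_atTop : Tendsto u atTop (𝓝 0)

/-- The properties of a nonlinearity `f` with primitive `F` on `(0, ∞)` from which uniqueness of the
ground state follows. The level `β` separates the crossings of two ground states which are excluded
by comparing energies from those which are excluded by a Wronskian. -/
structure IsAdmissible (f F : ℝ → ℝ) (β : ℝ) : Prop where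
  hasDerivAt : ∀ z > 0, HasDerivAt F (f z) z
  tendsto_zero : Tendsto F (𝓝[>] 0) (𝓝 0)
  locallyLipschitzOn : LocallyLipschitzOn (Ioi 0) f
  nonpos_of_le : ∀ z > 0, z ≤ β → F z ≤ 0
  antitoneOn_div : AntitoneOn (fun z => f z / (z - β)) (Ioi β)
  lt_of_nonneg : ∀ x > 0, ∀ y > x, 0 ≤ f y → 0 ≤ F y → F x < F y
  exists_near_zero : ∃ δ > 0, ∃ c > 0, AntitoneOn f (Ioo 0 δ) ∧
    ∀ z ∈ Ioo 0 δ, f z ≤ 0 ∧ F z ≤ -(c * z) ^ 2 / 2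

lemma IsAdmissible.eventually_nonpos {f F : ℝ → ℝ} {β : ℝ} (h : IsAdmissible f F β) :
    ∀ᶠ z in 𝓝[>] 0, f z ≤ 0 := by
  obtain ⟨δ, hδ, _, _, _, hnear⟩ := h.exists_near_zero
  filter_upwards [Ioo_mem_nhdsGT hδ] with z hz using (hnear z hz).1

lemma IsRadialSolution.const {k : ℕ} {f : ℝ → ℝ} {z : ℝ} (hz : 0 < z) (hfz : f z = 0) :
    IsRadialSolution k f fun _ => z where
  pos _ _ := hz
  hasDerivAt r _ := by simpa only [deriv_const] using hasDerivAt_const r z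
  hasDerivAt_deriv r _ := by simpa [hfz] using hasDerivAt_const r (0 : ℝ)

namespace IsGroundState

variable {k : ℕ} {f F u : ℝ → ℝ} {β r : ℝ}

lemma continuousOn_Ici (hu : IsGroundState k f u) : ContinuousOn u (Ici 0) := fun r hr =>
  (mem_Ici.1 hr).eq_or_lt.elim (fun h => h ▸ hu.hasDerivWithinAt_zero.continuousWithinAt)
    fun h => (hu.hasDerivAt r h).continuousAt.continuousWithinAt

lemma tendsto_nhdsGT_zero (hu : IsGroundState k f u) : Tendsto u (𝓝[>] 0) (𝓝 (u 0)) :=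
  hu.hasDerivWithinAt_zero.continuousWithinAt.mono_left (nhdsWithin_mono 0 Ioi_subset_Ici_self)

lemma tendsto_atTop_nhdsGT (hu : IsGroundState k f u) : Tendsto u atTop (𝓝[>] 0) :=
  tendsto_nhdsWithin_iff.2 ⟨hu.tendsto_atTop, (eventually_gt_atTop 0).mono hu.pos⟩

lemma energy_nonneg (hu : IsGroundState k f u) (hF : ∀ z > 0, HasDerivAt F (f z) z)
    (hF0 : Tendsto F (𝓝[>] 0) (𝓝 0)) (hr : 0 < r) : 0 ≤ energy F u r := by
  refine le_of_tendsto (hF0.comp hu.tendsto_atTop_nhdsGT) ?_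
  filter_upwards [eventually_ge_atTop r] with t ht
  calc F (u t) ≤ energy F u t := le_add_of_nonneg_left (by positivity)
    _ ≤ energy F u r := hu.antitoneOn_energy hF hr (hr.trans_le ht) ht

lemma energy_le (hu : IsGroundState k f u) (hF : ∀ z > 0, HasDerivAt F (f z) z) (hr : 0 < r) :
    energy F u r ≤ F (u 0) := by
  obtain ⟨c, hc, hderiv⟩ := exists_tendsto_deriv_of_hasDerivWithinAt
    (fun _ => hu.differentiableAt) hu.hasDerivWithinAt_zero
  have hlim : Tendsto (fun x => energy F u (c x)) (𝓝[>] 0) (𝓝 (0 ^ 2 / 2 + F (u 0))) :=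
    ((hderiv.pow 2).div_const 2).add
      ((hF _ hu.pos_zero).continuousAt.tendsto.comp (hu.tendsto_nhdsGT_zero.comp hc))
  rw [zero_pow two_ne_zero, zero_div, zero_add] at hlim
  refine ge_of_tendsto hlim ?_
  filter_upwards [hc (Ioo_mem_nhdsGT hr)] with x hx
  exact hu.antitoneOn_energy hF hx.1 hr hx.2.le

lemma tendsto_deriv_nhdsGT_zero (hu : IsGroundState k f u)
    (hF : ∀ z > 0, HasDerivAt F (f z) z) : Tendsto (deriv u) (𝓝[>] 0) (𝓝 0) := by
  have hlim : Tendsto (fun r => √(2 * (F (u 0) - F (u r)))) (𝓝[>] 0)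
      (𝓝 √(2 * (F (u 0) - F (u 0)))) :=
    ((((hF _ hu.pos_zero).continuousAt.tendsto.comp hu.tendsto_nhdsGT_zero).const_sub
      _).const_mul 2).sqrt
  rw [sub_self, mul_zero, sqrt_zero] at hlim
  refine squeeze_zero_norm' (eventually_nhdsWithin_of_forall fun r hr => abs_le_sqrt ?_) hlim
  have := hu.energy_le hF hr
  unfold energy at this
  linarith

lemma exists_monotoneOn_pow_mul_deriv (hu : IsGroundState k f u)
    (hf : ∀ᶠ z in 𝓝[>] 0, f z ≤ 0) :
    ∃ R > 0, MonotoneOn (fun r => r ^ k * deriv u r) (Ici R) := by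
  obtain ⟨R, hR⟩ := eventually_atTop.1
    ((hu.tendsto_atTop_nhdsGT.eventually hf).and (eventually_gt_atTop 0))
  refine ⟨R, (hR R le_rfl).2, monotoneOn_of_hasDerivAt_nonneg (convex_Ici R)
    (fun r hr => hu.hasDerivAt_pow_mul_deriv (hR r hr).2) fun r hr => ?_⟩
  have hr0 := (hR r hr).2
  exact neg_nonneg.2 (mul_nonpos_of_nonneg_of_nonpos (by positivity) (hR r hr).1)

lemma eventually_deriv_neg (hu : IsGroundState k f u) (hf : ∀ᶠ z in 𝓝[>] 0, f z ≤ 0) :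
    ∀ᶠ r in atTop, deriv u r < 0 := by
  obtain ⟨R, hR, hmono⟩ := hu.exists_monotoneOn_pow_mul_deriv hf
  filter_upwards [eventually_ge_atTop R] with r hr
  by_contra! hderiv
  have hr0 : 0 < r := hR.trans_le hr
  have hnonneg : ∀ s ∈ Ici r, 0 ≤ deriv u s := fun s hs =>
    nonneg_of_mul_nonneg_right
      ((mul_nonneg (by positivity) hderiv).trans (hmono hr (hr.trans hs) hs))
      (pow_pos (hr0.trans_le hs) k)
  have huMono : MonotoneOn u (Ici r) := monotoneOn_of_hasDerivAt_nonneg (convex_Ici r)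
    (fun s hs => hu.hasDerivAt s (hr0.trans_le hs)) hnonneg
  refine (hu.pos r hr0).not_ge (ge_of_tendsto hu.tendsto_atTop ?_)
  filter_upwards [eventually_ge_atTop r] with s hs using huMono self_mem_Ici hs hs

/- A smaller value at an earlier minimum would have smaller energy, but the energy decreases. -/
lemma isMinOn_of_deriv_eq_zero (hu : IsGroundState k f u) (h : IsAdmissible f F β) (hr : 0 < r)
    (hderiv : deriv u r = 0) (hfr : 0 ≤ f (u r)) : IsMinOn u (Icc 0 r) r := by
  obtain ⟨t, ht, hmin⟩ := isCompact_Icc.exists_isMinOn (nonempty_Icc.2 hr.le)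
    (hu.continuousOn_Ici.mono Icc_subset_Ici_self)
  have hFr : energy F u r = F (u r) := by simp [energy, hderiv]
  have hle : F (u r) ≤ F (u t) := by
    rcases ht.1.eq_or_lt with rfl | ht0
    · exact hFr ▸ hu.energy_le h.hasDerivAt hr
    rcases ht.2.eq_or_lt with rfl | htr
    · rfl
    have htcrit : deriv u t = 0 := (hmin.isLocalMin (Icc_mem_nhds ht0 htr)).deriv_eq_zero
    have hFt : energy F u t = F (u t) := by simp [energy, htcrit]
    exact hFr ▸ hFt ▸ hu.antitoneOn_energy h.hasDerivAt ht0 hr ht.2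
  have hut : 0 < u t := ht.1.eq_or_lt.elim (fun h => h ▸ hu.pos_zero) (hu.pos t)
  have hrt : u r ≤ u t := not_lt.1 fun hlt => hle.not_gt (h.lt_of_nonneg _ hut _ hlt hfr
    (hFr ▸ hu.energy_nonneg h.hasDerivAt h.tendsto_zero hr))
  exact fun s hs => hrt.trans (hmin hs)

lemma ne_zero_of_deriv_eq_zero (hu : IsGroundState k f u) (hf : LocallyLipschitzOn (Ioi 0) f)
    (hr : 0 < r) (hderiv : deriv u r = 0) : f (u r) ≠ 0 := fun hfr => by
  have hconst : EqOn u (fun _ => u r) (Ioi 0) :=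
    hu.eqOn_of_eq_of_deriv_eq (.const (hu.pos r hr) hfr) hf hr rfl (by rw [hderiv, deriv_const])
  have hlim : Tendsto u atTop (𝓝 (u r)) :=
    tendsto_const_nhds.congr' ((eventually_gt_atTop 0).mono fun s hs => (hconst hs).symm)
  exact (hu.pos r hr).ne' (tendsto_nhds_unique hlim hu.tendsto_atTop)

theorem deriv_neg (hu : IsGroundState k f u) (h : IsAdmissible f F β) (hr : 0 < r) :
    deriv u r < 0 := by
  by_contra! hderiv
  obtain ⟨R, hR, hrR⟩ := ((hu.eventually_deriv_neg h.eventually_nonpos).and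
    (eventually_ge_atTop r)).exists
  obtain ⟨s, hs, hs0, hneg⟩ := exists_last_zero hrR (fun t ht =>
    (hu.hasDerivAt_deriv t (hr.trans_le ht.1)).continuousAt.continuousWithinAt) hderiv hR
  have hspos : 0 < s := hr.trans_le hs.1
  have hderiv2 : HasDerivAt (deriv u) (-f (u s)) s := by
    simpa [hs0] using hu.hasDerivAt_deriv s hspos
  have hfs : 0 < f (u s) := by
    refine lt_of_le_of_ne ?_ (hu.ne_zero_of_deriv_eq_zero h.locallyLipschitzOn hspos hs0).symm
    refine neg_nonpos.1 (nonpos_of_hasDerivAt_of_eventually_nonpos hderiv2 hs0 ?_)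
    filter_upwards [Ioo_mem_nhdsGT hs.2] with t ht using (hneg t ⟨ht.1, ht.2.le⟩).le
  have hmin := hu.isMinOn_of_deriv_eq_zero h hspos hs0 hfs.le
  exact (nonneg_of_isMinOn_Icc_right hspos (fun t ht => hu.hasDerivAt t ht.1) hderiv2 hs0
    hmin).not_gt (neg_neg_of_pos hfs)

lemma strictAntiOn (hu : IsGroundState k f u) (h : IsAdmissible f F β) :
    StrictAntiOn u (Ici 0) :=
  strictAntiOn_of_deriv_neg (convex_Ici 0) hu.continuousOn_Ici fun r hr =>
    hu.deriv_neg h (by simpa using hr)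

lemma exists_eventually_mul_le_neg_deriv (hu : IsGroundState k f u) (h : IsAdmissible f F β) :
    ∃ c > 0, ∀ᶠ r in atTop, c * u r ≤ -deriv u r := by
  obtain ⟨δ, hδ, c, hc, _, hnear⟩ := h.exists_near_zero
  refine ⟨c, hc, ?_⟩
  filter_upwards [hu.tendsto_atTop_nhdsGT (Ioo_mem_nhdsGT hδ), eventually_gt_atTop 0]
    with r hur hr
  have hsq : (c * u r) ^ 2 ≤ (-deriv u r) ^ 2 := by
    have henergy := hu.energy_nonneg h.hasDerivAt h.tendsto_zero hr
    have hF := (hnear _ hur).2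
    unfold energy at henergy
    linarith
  exact le_of_sq_le_sq hsq (neg_pos.2 (hu.deriv_neg h hr)).le

lemma exists_eventually_le_mul_exp (hu : IsGroundState k f u) (h : IsAdmissible f F β) :
    ∃ c > 0, ∃ C, ∀ᶠ r in atTop, u r ≤ C * exp (-c * r) := by
  obtain ⟨c, hc, hle⟩ := hu.exists_eventually_mul_le_neg_deriv h
  obtain ⟨R, hR⟩ := eventually_atTop.1 (hle.and (eventually_gt_atTop 0))
  have hanti : AntitoneOn (fun r => u r * exp (c * r)) (Ici R) := by
    refine antitoneOn_of_hasDerivAt_nonpos (convex_Ici R) (fun r hr =>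
      (hu.hasDerivAt r (hR r hr).2).mul ((hasDerivAt_id r).const_mul c).exp) fun r hr => ?_
    have hfactor : deriv u r * exp (c * r) + u r * (exp (c * r) * (c * 1))
        = exp (c * r) * (deriv u r + c * u r) := by ring
    exact hfactor ▸ mul_nonpos_of_nonneg_of_nonpos (exp_pos _).le (by linarith [(hR r hr).1])
  refine ⟨c, hc, u R * exp (c * R), ?_⟩
  filter_upwards [eventually_ge_atTop R] with r hr
  rw [neg_mul, exp_neg, ← div_eq_mul_inv, le_div_iff₀ (exp_pos _)]
  exact hanti self_mem_Ici hr hr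

lemma eventually_pow_mul_neg_deriv_le (hu : IsGroundState k f u)
    (h : IsAdmissible f F β) : ∀ᶠ r in atTop, r ^ k * -deriv u r ≤ r ^ k * u (r - 1) := by
  obtain ⟨R, hR, hmono⟩ := hu.exists_monotoneOn_pow_mul_deriv h.eventually_nonpos
  filter_upwards [eventually_ge_atTop (R + 1)] with r hr
  have hr1 : R ≤ r - 1 := by linarith
  have hpos {s : ℝ} (hs : r - 1 ≤ s) : 0 < s := hR.trans_le (hr1.trans hs)
  obtain ⟨s, hs, hslope⟩ := exists_hasDerivAt_eq_slope u (deriv u) (sub_one_lt r)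
    (fun s hs => (hu.hasDerivAt s (hpos hs.1)).continuousAt.continuousWithinAt)
    fun s hs => hu.hasDerivAt s (hpos hs.1.le)
  rw [sub_sub_cancel, div_one] at hslope
  have hr0 : 0 < r := hpos (sub_one_lt r).le
  have hs0 : 0 < s := hpos hs.1.le
  calc r ^ k * -deriv u r ≤ s ^ k * -deriv u s := by
        have := hmono (hr1.trans hs.1.le) (hr1.trans (sub_one_lt r).le) hs.2.le
        simp only at this
        linarith
    _ ≤ r ^ k * -deriv u s := by
        gcongr
        · exact (neg_pos.2 (hu.deriv_neg h hs0)).le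
        · exact hs.2.le
    _ ≤ r ^ k * u (r - 1) := by
        gcongr
        linarith [hu.pos r hr0]

lemma tendsto_pow_mul_deriv_atTop (hu : IsGroundState k f u) (h : IsAdmissible f F β) :
    Tendsto (fun r => r ^ k * deriv u r) atTop (𝓝 0) := by
  obtain ⟨c, hc, C, hexp⟩ := hu.exists_eventually_le_mul_exp h
  have hlim : Tendsto (fun r => C * exp c * (r ^ k * exp (-c * r))) atTop (𝓝 0) := by
    simpa only [rpow_natCast, mul_zero] using
      (tendsto_rpow_mul_exp_neg_mul_atTop_nhds_zero k c hc).const_mul (C * exp c)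
  refine squeeze_zero_norm' ?_ hlim
  have hshift : Tendsto (fun r : ℝ => r - 1) atTop atTop :=
    tendsto_atTop_add_const_right _ _ tendsto_id
  filter_upwards [eventually_gt_atTop 0, hu.eventually_pow_mul_neg_deriv_le h,
    hshift.eventually hexp] with r hr hle hexpr
  rw [norm_mul, norm_of_nonneg (by positivity), norm_of_nonpos (hu.deriv_neg h hr).le]
  calc r ^ k * -deriv u r ≤ r ^ k * u (r - 1) := hle
    _ ≤ r ^ k * (C * exp (-c * (r - 1))) := by gcongr
    _ = C * exp c * (r ^ k * exp (-c * r)) := by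
        rw [show -c * (r - 1) = c + -c * r by ring, exp_add]
        ring

lemma tendsto_deriv_atTop (hu : IsGroundState k f u) (h : IsAdmissible f F β) :
    Tendsto (deriv u) atTop (𝓝 0) := by
  refine squeeze_zero_norm' ?_
    (tendsto_zero_iff_norm_tendsto_zero.1 (hu.tendsto_pow_mul_deriv_atTop h))
  filter_upwards [eventually_ge_atTop 1] with r hr
  rw [norm_mul]
  refine le_mul_of_one_le_left (norm_nonneg _) ?_
  rw [norm_of_nonneg (by positivity)]
  exact one_le_pow₀ hr

lemma tendsto_pow_mul_energy_atTop (hu : IsGroundState k f u) (h : IsAdmissible f F β) :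
    Tendsto (fun r => r ^ (2 * k) * energy F u r) atTop (𝓝 0) := by
  obtain ⟨δ, hδ, c, _, _, hnear⟩ := h.exists_near_zero
  have hlim : Tendsto (fun r => (r ^ k * deriv u r) ^ 2 / 2) atTop (𝓝 0) := by
    simpa using ((hu.tendsto_pow_mul_deriv_atTop h).pow 2).div_const 2
  refine squeeze_zero' ?_ ?_ hlim
  · filter_upwards [eventually_gt_atTop 0] with r hr
    exact mul_nonneg (by positivity) (hu.energy_nonneg h.hasDerivAt h.tendsto_zero hr)
  · filter_upwards [hu.tendsto_atTop_nhdsGT (Ioo_mem_nhdsGT hδ)] with r hur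
    have hF : F (u r) ≤ 0 := (hnear _ hur).2.trans (by linarith [sq_nonneg (c * u r)])
    calc r ^ (2 * k) * energy F u r ≤ r ^ (2 * k) * (deriv u r ^ 2 / 2) := by
          have : 0 ≤ r ^ (2 * k) := (even_two_mul k).pow_nonneg r
          gcongr
          unfold energy
          linarith
      _ = (r ^ k * deriv u r) ^ 2 / 2 := by ring

end IsGroundState

/-! ### Height as the independent variable -/

/-- The radius at which `u` takes the value `z`, for `u` injective on `(0, ∞)` and `z` in its
range there; a junk value otherwise. -/
noncomputable def radiusAt (u : ℝ → ℝ) : ℝ → ℝ := Function.invFunOn u (Ioi 0)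

/-- The slope `-u'` as a function of the height `z = u(r)`. -/
noncomputable def steepness (u : ℝ → ℝ) (z : ℝ) : ℝ := -deriv u (radiusAt u z)

/-- The weighted energy `r ^ (2 * k) * E(r)` as a function of the height `z = u(r)`. The weight
makes its derivative proportional to `F(z)`. -/
noncomputable def heightEnergy (k : ℕ) (F u : ℝ → ℝ) (z : ℝ) : ℝ :=
  radiusAt u z ^ (2 * k) * energy F u (radiusAt u z)

lemma IsRadialSolution.hasDerivAt_pow_mul_energy {k : ℕ} {f F u : ℝ → ℝ} {r : ℝ}
    (hu : IsRadialSolution k f u) (hF : ∀ z > 0, HasDerivAt F (f z) z) (hr : 0 < r) :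
    HasDerivAt (fun s => s ^ (2 * k) * energy F u s) (2 * k * r ^ (2 * k - 1) * F (u r)) r := by
  refine ((hasDerivAt_pow (2 * k) r).mul (hu.hasDerivAt_energy hF hr)).congr_deriv ?_
  rcases k with _ | k
  · simp
  · rw [show 2 * (k + 1) - 1 = 2 * k + 1 by omega, show 2 * (k + 1) = 2 * k + 1 + 1 by omega,
      pow_succ _ (2 * k + 1), energy]
    push_cast
    field_simp
    ring

namespace IsGroundState

variable {k : ℕ} {f F u v : ℝ → ℝ} {β r z : ℝ}

lemma bijOn (hu : IsGroundState k f u) (h : IsAdmissible f F β) :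
    BijOn u (Ioi 0) (Ioo 0 (u 0)) := by
  have hanti := hu.strictAntiOn h
  refine ⟨fun r hr => ⟨hu.pos r hr, hanti self_mem_Ici (mem_Ioi.1 hr).le hr⟩,
    hanti.injOn.mono Ioi_subset_Ici_self, fun z hz => ?_⟩
  obtain ⟨R, hR, hR0⟩ := ((hu.tendsto_atTop.eventually_lt_const hz.1).and
    (eventually_gt_atTop 0)).exists
  obtain ⟨r, hr, rfl⟩ := intermediate_value_Icc' hR0.le
    (hu.continuousOn_Ici.mono Icc_subset_Ici_self) ⟨hR.le, hz.2.le⟩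
  exact ⟨r, hr.1.lt_of_ne fun h => hz.2.ne (h ▸ rfl), rfl⟩

lemma radiusAt_pos (hu : IsGroundState k f u) (h : IsAdmissible f F β) (hz : z ∈ Ioo 0 (u 0)) :
    0 < radiusAt u z :=
  Function.invFunOn_mem ((hu.bijOn h).surjOn hz)

lemma apply_radiusAt (hu : IsGroundState k f u) (h : IsAdmissible f F β)
    (hz : z ∈ Ioo 0 (u 0)) : u (radiusAt u z) = z :=
  (hu.bijOn h).invOn_invFunOn.2 hz

lemma radiusAt_apply (hu : IsGroundState k f u) (h : IsAdmissible f F β) (hr : 0 < r) :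
    radiusAt u (u r) = r :=
  (hu.bijOn h).invOn_invFunOn.1 hr

lemma steepness_apply (hu : IsGroundState k f u) (h : IsAdmissible f F β) (hr : 0 < r) :
    steepness u (u r) = -deriv u r := by
  rw [steepness, hu.radiusAt_apply h hr]

lemma steepness_pos (hu : IsGroundState k f u) (h : IsAdmissible f F β)
    (hz : z ∈ Ioo 0 (u 0)) : 0 < steepness u z :=
  neg_pos.2 (hu.deriv_neg h (hu.radiusAt_pos h hz))

lemma le_radiusAt_iff (hu : IsGroundState k f u) (h : IsAdmissible f F β) (hr : 0 < r)
    (hz : z ∈ Ioo 0 (u 0)) : r ≤ radiusAt u z ↔ z ≤ u r := by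
  rw [← (hu.strictAntiOn h).le_iff_ge (hu.radiusAt_pos h hz).le hr.le, hu.apply_radiusAt h hz]

lemma strictAntiOn_radiusAt (hu : IsGroundState k f u) (h : IsAdmissible f F β) :
    StrictAntiOn (radiusAt u) (Ioo 0 (u 0)) := fun z hz w hw hzw => by
  rwa [← not_le, hu.le_radiusAt_iff h (hu.radiusAt_pos h hz) hw, hu.apply_radiusAt h hz, not_le]

lemma image_radiusAt (hu : IsGroundState k f u) (h : IsAdmissible f F β) :
    radiusAt u '' Ioo 0 (u 0) = Ioi 0 :=
  ((hu.bijOn h).symm (hu.bijOn h).invOn_invFunOn.symm).image_eq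

lemma hasDerivAt_radiusAt (hu : IsGroundState k f u) (h : IsAdmissible f F β)
    (hz : z ∈ Ioo 0 (u 0)) : HasDerivAt (radiusAt u) (-(steepness u z)⁻¹) z := by
  have hnhds : Ioo 0 (u 0) ∈ 𝓝 z := Ioo_mem_nhds hz.1 hz.2
  have hcont : ContinuousAt (radiusAt u) z := by
    have himage : (fun w => -radiusAt u w) '' Ioo 0 (u 0) = Iio 0 := by
      rw [← image_image Neg.neg (radiusAt u), hu.image_radiusAt h, image_neg_Ioi, neg_zero]
    have hneg := (hu.strictAntiOn_radiusAt h).neg.continuousAt_of_image_mem_nhds hnhds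
      (himage ▸ Iio_mem_nhds (neg_neg_of_pos (hu.radiusAt_pos h hz)))
    exact hneg.neg.congr (.of_forall fun w => neg_neg (radiusAt u w))
  have hderiv := HasDerivAt.of_local_left_inverse hcont (hu.hasDerivAt _ (hu.radiusAt_pos h hz))
    (hu.deriv_neg h (hu.radiusAt_pos h hz)).ne
    (by filter_upwards [hnhds] with w hw using hu.apply_radiusAt h hw)
  rwa [steepness, inv_neg, neg_neg]

lemma hasDerivAt_steepness (hu : IsGroundState k f u) (h : IsAdmissible f F β)
    (hz : z ∈ Ioo 0 (u 0)) :
    HasDerivAt (steepness u) (k / radiusAt u z - f z / steepness u z) z := by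
  have hne := (hu.steepness_pos h hz).ne'
  refine ((hu.hasDerivAt_deriv _ (hu.radiusAt_pos h hz)).comp z
    (hu.hasDerivAt_radiusAt h hz)).neg.congr_deriv ?_
  rw [hu.apply_radiusAt h hz, show deriv u (radiusAt u z) = -steepness u z by simp [steepness]]
  field_simp

lemma tendsto_radiusAt_nhdsGT_zero (hu : IsGroundState k f u) (h : IsAdmissible f F β) :
    Tendsto (radiusAt u) (𝓝[>] 0) atTop := by
  refine Filter.tendsto_atTop.2 fun R => ?_
  have hR : 0 < max R 1 := lt_max_of_lt_right one_pos
  filter_upwards [Ioo_mem_nhdsGT ((hu.bijOn h).mapsTo hR).1] with z hz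
  have hzu : z ∈ Ioo 0 (u 0) := ⟨hz.1, hz.2.trans ((hu.bijOn h).mapsTo hR).2⟩
  exact (le_max_left R 1).trans ((hu.le_radiusAt_iff h hR hzu).2 hz.2.le)

lemma tendsto_steepness_nhdsGT_zero (hu : IsGroundState k f u) (h : IsAdmissible f F β) :
    Tendsto (steepness u) (𝓝[>] 0) (𝓝 0) := by
  have hlim := ((hu.tendsto_deriv_atTop h).comp (hu.tendsto_radiusAt_nhdsGT_zero h)).neg
  rwa [neg_zero] at hlim

lemma hasDerivAt_heightEnergy (hu : IsGroundState k f u) (h : IsAdmissible f F β)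
    (hz : z ∈ Ioo 0 (u 0)) :
    HasDerivAt (heightEnergy k F u)
      (2 * k * -F z * (radiusAt u z ^ (2 * k - 1) / steepness u z)) z := by
  refine ((hu.hasDerivAt_pow_mul_energy h.hasDerivAt (hu.radiusAt_pos h hz)).comp z
    (hu.hasDerivAt_radiusAt h hz)).congr_deriv ?_
  rw [hu.apply_radiusAt h hz]
  ring

lemma heightEnergy_apply (hu : IsGroundState k f u) (h : IsAdmissible f F β) (hr : 0 < r) :
    heightEnergy k F u (u r) = r ^ (2 * k) * energy F u r := by
  rw [heightEnergy, hu.radiusAt_apply h hr]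

lemma tendsto_heightEnergy_nhdsGT_zero (hu : IsGroundState k f u) (h : IsAdmissible f F β) :
    Tendsto (heightEnergy k F u) (𝓝[>] 0) (𝓝 0) :=
  (hu.tendsto_pow_mul_energy_atTop h).comp (hu.tendsto_radiusAt_nhdsGT_zero h)

lemma radiusAt_le_radiusAt (hu : IsGroundState k f u) (hv : IsGroundState k f v)
    (h : IsAdmissible f F β) (hr : 0 < r) (hvu : ∀ s ≥ r, v s ≤ u s) (hz : z ∈ Ioc 0 (v r)) :
    radiusAt v z ≤ radiusAt u z := by
  have hzv : z ∈ Ioo 0 (v 0) := ⟨hz.1, hz.2.trans_lt ((hv.bijOn h).mapsTo hr).2⟩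
  have hzu : z ∈ Ioo 0 (u 0) :=
    ⟨hz.1, (hz.2.trans (hvu r le_rfl)).trans_lt ((hu.bijOn h).mapsTo hr).2⟩
  rw [hu.le_radiusAt_iff h (hv.radiusAt_pos h hzv) hzu]
  calc z = v (radiusAt v z) := (hv.apply_radiusAt h hzv).symm
    _ ≤ u (radiusAt v z) := hvu _ ((hv.le_radiusAt_iff h hr hzv).2 hz.2)

end IsGroundState

/-! ### Crossings of two ground states -/

/-- The Wronskian of the shifted solutions `u - β` and `v - β`, weighted by `r ^ k` so that its
derivative is free of `u'` and `v'`. -/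
noncomputable def shiftedWronskian (k : ℕ) (β : ℝ) (u v : ℝ → ℝ) (r : ℝ) : ℝ :=
  r ^ k * deriv v r * (u r - β) - r ^ k * deriv u r * (v r - β)

lemma IsRadialSolution.hasDerivAt_shiftedWronskian {k : ℕ} {f u v : ℝ → ℝ} {r : ℝ}
    (hu : IsRadialSolution k f u) (hv : IsRadialSolution k f v) (β : ℝ) (hr : 0 < r) :
    HasDerivAt (shiftedWronskian k β u v)
      (r ^ k * (f (u r) * (v r - β) - f (v r) * (u r - β))) r :=
  (((hv.hasDerivAt_pow_mul_deriv hr).mul ((hu.hasDerivAt r hr).sub_const β)).sub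
    ((hu.hasDerivAt_pow_mul_deriv hr).mul ((hv.hasDerivAt r hr).sub_const β))).congr_deriv (by ring)

lemma IsAdmissible.mul_sub_le_mul_sub {f F : ℝ → ℝ} {β y z : ℝ} (h : IsAdmissible f F β)
    (hy : β < y) (hyz : y ≤ z) : f z * (y - β) ≤ f y * (z - β) := by
  have hle := h.antitoneOn_div hy (hy.trans_le hyz) hyz
  rwa [div_le_div_iff₀ (sub_pos.2 (hy.trans_le hyz)) (sub_pos.2 hy)] at hle

lemma shiftedWronskian_nonneg_iff {k : ℕ} {u v : ℝ → ℝ} {β r : ℝ} (hr : 0 < r) (heq : u r = v r)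
    (hβ : β < u r) :
    0 ≤ shiftedWronskian k β u v r ↔ deriv u r ≤ deriv v r := by
  have hfactor : shiftedWronskian k β u v r = r ^ k * (u r - β) * (deriv v r - deriv u r) := by
    rw [shiftedWronskian, heq]
    ring
  rw [hfactor, mul_nonneg_iff_of_pos_left (mul_pos (pow_pos hr k) (sub_pos.2 hβ)), sub_nonneg]

lemma IsRadialSolution.monotoneOn_shiftedWronskian {k : ℕ} {f F u v : ℝ → ℝ} {β : ℝ} {D : Set ℝ}
    (hu : IsRadialSolution k f u) (hv : IsRadialSolution k f v) (h : IsAdmissible f F β)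
    (hD : Convex ℝ D) (hpos : ∀ r ∈ D, 0 < r) (hβ : ∀ r ∈ D, β < u r)
    (huv : ∀ r ∈ D, u r ≤ v r) :
    MonotoneOn (shiftedWronskian k β u v) D :=
  monotoneOn_of_hasDerivAt_nonneg hD
    (fun r hr => hu.hasDerivAt_shiftedWronskian hv β (hpos r hr)) fun r hr =>
      mul_nonneg (pow_pos (hpos r hr) k).le
        (sub_nonneg.2 (h.mul_sub_le_mul_sub (hβ r hr) (huv r hr)))

namespace IsGroundState

variable {k : ℕ} {f F u v : ℝ → ℝ} {β δ a r z : ℝ}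

lemma steepness_le_steepness (hu : IsGroundState k f u) (hv : IsGroundState k f v)
    (h : IsAdmissible f F β) (hzu : z ∈ Ioo 0 (u 0)) (hzv : z ∈ Ioo 0 (v 0))
    (hradius : ∀ w ∈ Ioc 0 z, radiusAt v w ≤ radiusAt u w) : steepness u z ≤ steepness v z := by
  have hsubu : Ioc 0 z ⊆ Ioo 0 (u 0) := Ioc_subset_Ioo_right hzu.2
  have hsubv : Ioc 0 z ⊆ Ioo 0 (v 0) := Ioc_subset_Ioo_right hzv.2
  have hcont : ContinuousOn (fun w => f w / (steepness u w * steepness v w)) (Ioc 0 z) :=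
    (h.locallyLipschitzOn.continuousOn.mono Ioc_subset_Ioi_self).div
      (ContinuousOn.mul
        (fun w hw => (hu.hasDerivAt_steepness h (hsubu hw)).continuousAt.continuousWithinAt)
        fun w hw => (hv.hasDerivAt_steepness h (hsubv hw)).continuousAt.continuousWithinAt)
      fun w hw => (mul_pos (hu.steepness_pos h (hsubu hw)) (hv.steepness_pos h (hsubv hw))).ne'
  have hnonpos : ∀ᶠ w in 𝓝[>] 0, f w / (steepness u w * steepness v w) ≤ 0 := by
    filter_upwards [h.eventually_nonpos, Ioc_mem_nhdsGT hzu.1] with w hfw hw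
    exact div_nonpos_of_nonpos_of_nonneg hfw
      (mul_pos (hu.steepness_pos h (hsubu hw)) (hv.steepness_pos h (hsubv hw))).le
  obtain ⟨K, hK⟩ := exists_forall_le_of_continuousOn_Ioc hcont hnonpos
  refine sub_nonpos.1 (nonpos_of_deriv_le_mul_of_tendsto_zero
    (g := fun w => steepness u w - steepness v w) (K := K) hzu.1 (fun w hw =>
      (hu.hasDerivAt_steepness h (hsubu hw)).sub (hv.hasDerivAt_steepness h (hsubv hw)))
    (fun w hw hpos => ?_) ?_)
  · have hP := hu.steepness_pos h (hsubu hw)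
    have hQ := hv.steepness_pos h (hsubv hw)
    have hdamp : k / radiusAt u w ≤ k / radiusAt v w :=
      div_le_div_of_nonneg_left k.cast_nonneg (hv.radiusAt_pos h (hsubv hw)) (hradius w hw)
    calc k / radiusAt u w - f w / steepness u w - (k / radiusAt v w - f w / steepness v w)
        ≤ f w / steepness v w - f w / steepness u w := by linarith
      _ = f w / (steepness u w * steepness v w) * (steepness u w - steepness v w) := by
          field_simp
      _ ≤ K * (steepness u w - steepness v w) := by gcongr; exact hK w hw
  · simpa only [sub_zero] using
      (hu.tendsto_steepness_nhdsGT_zero h).sub (hv.tendsto_steepness_nhdsGT_zero h)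

lemma steepness_le_steepness_of_le (hu : IsGroundState k f u) (hv : IsGroundState k f v)
    (h : IsAdmissible f F β) (hr : 0 < r) (hvu : ∀ s ≥ r, v s ≤ u s) (hz : z ∈ Ioc 0 (v r)) :
    steepness u z ≤ steepness v z :=
  hu.steepness_le_steepness hv h
    ⟨hz.1, (hz.2.trans (hvu r le_rfl)).trans_lt ((hu.bijOn h).mapsTo hr).2⟩
    ⟨hz.1, hz.2.trans_lt ((hv.bijOn h).mapsTo hr).2⟩
    fun _ hw => hu.radiusAt_le_radiusAt hv h hr hvu ⟨hw.1, hw.2.trans hz.2⟩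

lemma monotoneOn_heightEnergy_sub (hu : IsGroundState k f u) (hv : IsGroundState k f v)
    (h : IsAdmissible f F β) (hr : 0 < r) (hvu : ∀ s ≥ r, v s ≤ u s) (hβ : v r ≤ β) :
    MonotoneOn (fun z => heightEnergy k F u z - heightEnergy k F v z) (Ioc 0 (v r)) := by
  have hsubv : Ioc 0 (v r) ⊆ Ioo 0 (v 0) := Ioc_subset_Ioo_right ((hv.bijOn h).mapsTo hr).2
  have hsubu : Ioc 0 (v r) ⊆ Ioo 0 (u 0) :=
    Ioc_subset_Ioo_right ((hvu r le_rfl).trans_lt ((hu.bijOn h).mapsTo hr).2)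
  refine monotoneOn_of_hasDerivAt_nonneg (convex_Ioc 0 (v r)) (fun z hz =>
    (hu.hasDerivAt_heightEnergy h (hsubu hz)).sub (hv.hasDerivAt_heightEnergy h (hsubv hz)))
    fun z hz => ?_
  have hF : 0 ≤ 2 * k * -F z :=
    mul_nonneg (by positivity) (neg_nonneg.2 (h.nonpos_of_le z hz.1 (hz.2.trans hβ)))
  have hquot : radiusAt v z ^ (2 * k - 1) / steepness v z
      ≤ radiusAt u z ^ (2 * k - 1) / steepness u z :=
    div_le_div₀ (pow_nonneg (hu.radiusAt_pos h (hsubu hz)).le _)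
      (pow_le_pow_left₀ (hv.radiusAt_pos h (hsubv hz)).le
        (hu.radiusAt_le_radiusAt hv h hr hvu hz) _)
      (hu.steepness_pos h (hsubu hz)) (hu.steepness_le_steepness_of_le hv h hr hvu hz)
  exact sub_nonneg.2 (mul_le_mul_of_nonneg_left hquot hF)

lemma deriv_le_deriv_of_crossing_le (hu : IsGroundState k f u) (hv : IsGroundState k f v)
    (h : IsAdmissible f F β) (hr : 0 < r) (heq : u r = v r) (hvu : ∀ s ≥ r, v s ≤ u s)
    (hβ : v r ≤ β) : deriv u r ≤ deriv v r := by
  have hlim := (hu.tendsto_heightEnergy_nhdsGT_zero h).sub (hv.tendsto_heightEnergy_nhdsGT_zero h)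
  rw [sub_zero] at hlim
  have hnonneg : 0 ≤ heightEnergy k F u (v r) - heightEnergy k F v (v r) := by
    refine le_of_tendsto hlim ?_
    filter_upwards [Ioc_mem_nhdsGT (hv.pos r hr)] with z hz
    exact hu.monotoneOn_heightEnergy_sub hv h hr hvu hβ hz (right_mem_Ioc.2 (hv.pos r hr)) hz.2
  rw [hv.heightEnergy_apply h hr, ← heq, hu.heightEnergy_apply h hr, ← mul_sub] at hnonneg
  have henergy := nonneg_of_mul_nonneg_right hnonneg (pow_pos hr (2 * k))
  rw [energy, energy, heq] at henergy
  refine neg_le_neg_iff.1 (le_of_sq_le_sq ?_ (neg_pos.2 (hu.deriv_neg h hr)).le)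
  linarith

lemma tendsto_shiftedWronskian_nhdsGT_zero (hu : IsGroundState k f u) (hv : IsGroundState k f v)
    (hF : ∀ z > 0, HasDerivAt F (f z) z) :
    Tendsto (shiftedWronskian k β u v) (𝓝[>] 0) (𝓝 0) := by
  have hpow : Tendsto (fun r : ℝ => r ^ k) (𝓝[>] 0) (𝓝 (0 ^ k)) :=
    (continuous_pow k).continuousAt.tendsto.mono_left nhdsWithin_le_nhds
  have hlim :=
    ((hpow.mul (hv.tendsto_deriv_nhdsGT_zero hF)).mul (hu.tendsto_nhdsGT_zero.sub_const β)).sub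
      ((hpow.mul (hu.tendsto_deriv_nhdsGT_zero hF)).mul (hv.tendsto_nhdsGT_zero.sub_const β))
  rwa [mul_zero, zero_mul, zero_mul, sub_zero] at hlim

lemma deriv_le_deriv_of_lt_crossing (hu : IsGroundState k f u) (hv : IsGroundState k f v)
    (h : IsAdmissible f F β) (hr : 0 < r) (heq : u r = v r) (hβ : β < v r) :
    deriv u r ≤ deriv v r := by
  by_contra! hderiv
  have hβu : ∀ s ∈ Ioc 0 r, β < u s := fun s hs =>
    (heq ▸ hβ).trans_le ((hu.strictAntiOn h).antitoneOn hs.1.le hr.le hs.2)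
  refine hderiv.not_ge ((shiftedWronskian_nonneg_iff (k := k) hr heq (heq ▸ hβ)).1 ?_)
  by_cases hall : ∀ s ∈ Ioc 0 r, u s ≤ v s
  · refine le_of_tendsto (hu.tendsto_shiftedWronskian_nhdsGT_zero (β := β) hv h.hasDerivAt) ?_
    filter_upwards [Ioc_mem_nhdsGT hr] with s hs
    exact hu.monotoneOn_shiftedWronskian hv.toIsRadialSolution h (convex_Ioc 0 r)
      (fun t ht => ht.1) hβu hall hs (right_mem_Ioc.2 hr) hs.2
  · push Not at hall
    obtain ⟨s, hs, hvus⟩ := hall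
    have hsr : s < r := hs.2.lt_of_ne fun h => hvus.ne (h ▸ heq.symm)
    obtain ⟨a, ha, heqa, hderiva, huv⟩ :=
      exists_previous_crossing hsr (fun t ht => hu.differentiableAt (hs.1.trans_le ht.1))
        (fun t ht => hv.differentiableAt (hs.1.trans_le ht.1)) hvus.le heq hderiv
    have hsub : Icc a r ⊆ Ioc 0 r := fun t ht => ⟨(hs.1.trans_le ha.1).trans_le ht.1, ht.2⟩
    have haIoc : a ∈ Ioc 0 r := hsub (left_mem_Icc.2 ha.2.le)
    calc 0 ≤ shiftedWronskian k β u v a :=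
          (shiftedWronskian_nonneg_iff haIoc.1 heqa (hβu a haIoc)).2 hderiva
      _ ≤ shiftedWronskian k β u v r :=
          hu.monotoneOn_shiftedWronskian hv.toIsRadialSolution h (convex_Icc a r)
            (fun t ht => (hsub ht).1) (fun t ht => hβu t (hsub ht)) huv
            (left_mem_Icc.2 ha.2.le) (right_mem_Icc.2 ha.2.le) ha.2.le

/- `(u - v) ^ 2` increases from `0`, so it can only tend to `0` by vanishing identically. -/
lemma eqOn_Ici_of_eq_of_antitoneOn (hu : IsGroundState k f u) (hv : IsGroundState k f v)
    (hf : AntitoneOn f (Ioo 0 δ)) (ha : 0 < a) (huδ : ∀ r ≥ a, u r < δ) (hvδ : ∀ r ≥ a, v r < δ)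
    (heq : u a = v a) : EqOn u v (Ici a) := by
  have hsq : MonotoneOn (fun r => (u r - v r) ^ 2) (Ici a) := by
    refine monotoneOn_of_hasDerivAt_nonneg (convex_Ici a) (fun r hr =>
      ((hu.hasDerivAt r (ha.trans_le hr)).sub (hv.hasDerivAt r (ha.trans_le hr))).pow 2)
      fun r hr => ?_
    have hle := hu.monotoneOn_pow_mul_deriv_sub_mul_sub hv.toIsRadialSolution hf ha huδ hvδ
      self_mem_Ici hr hr
    simp only [heq, sub_self, mul_zero, mul_assoc] at hle
    have hprod := nonneg_of_mul_nonneg_right hle (pow_pos (ha.trans_le hr) k)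
    calc 0 ≤ 2 * ((deriv u r - deriv v r) * (u r - v r)) := mul_nonneg zero_le_two hprod
      _ = _ := by simp only [Pi.sub_apply]; push_cast; ring
  have hlim : Tendsto (fun r => (u r - v r) ^ 2) atTop (𝓝 0) := by
    simpa using (hu.tendsto_atTop.sub hv.tendsto_atTop).pow 2
  intro r hr
  refine sub_eq_zero.1 (pow_eq_zero_iff two_ne_zero |>.1 (le_antisymm ?_ (sq_nonneg _)))
  refine ge_of_tendsto hlim ?_
  filter_upwards [eventually_ge_atTop r] with s hs using hsq hr (hr.trans hs) hs

lemma eqOn_of_eq_of_antitoneOn (hu : IsGroundState k f u) (hv : IsGroundState k f v)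
    (hlip : LocallyLipschitzOn (Ioi 0) f) (hf : AntitoneOn f (Ioo 0 δ)) (ha : 0 < a)
    (huδ : ∀ r ≥ a, u r < δ) (hvδ : ∀ r ≥ a, v r < δ) (heq : u a = v a) : EqOn u v (Ioi 0) := by
  have htail := hu.eqOn_Ici_of_eq_of_antitoneOn hv hf ha huδ hvδ heq
  have hmem : Ici a ∈ 𝓝 (a + 1) := Ici_mem_nhds (lt_add_one a)
  exact hu.eqOn_of_eq_of_deriv_eq hv.toIsRadialSolution hlip (add_pos ha one_pos)
    (htail (mem_of_mem_nhds hmem)) (htail.eventuallyEq_of_mem hmem).deriv_eq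

lemma eventually_lt_or_eventually_lt (hu : IsGroundState k f u) (hv : IsGroundState k f v)
    (h : IsAdmissible f F β) (hne : ¬ EqOn u v (Ioi 0)) :
    (∀ᶠ r in atTop, v r < u r) ∨ ∀ᶠ r in atTop, u r < v r := by
  obtain ⟨δ, hδ, _, _, hanti, _⟩ := h.exists_near_zero
  obtain ⟨R, hR⟩ := eventually_atTop.1 (((eventually_gt_atTop 0).and
    (hu.tendsto_atTop.eventually_lt_const hδ)).and (hv.tendsto_atTop.eventually_lt_const hδ))
  have hcross : ∀ r ≥ R, u r ≠ v r := fun r hr heq => hne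
    (hu.eqOn_of_eq_of_antitoneOn hv h.locallyLipschitzOn hanti (hR r hr).1.1
      (fun s hs => (hR s (hr.trans hs)).1.2) (fun s hs => (hR s (hr.trans hs)).2) heq)
  have hIci : Ici R ⊆ Ici 0 := fun r hr => (hR r hr).1.1.le
  by_contra! hcon
  obtain ⟨a, huva, ha⟩ := (hcon.1.and_eventually (eventually_ge_atTop R)).exists
  obtain ⟨b, hvub, hb⟩ := (hcon.2.and_eventually (eventually_ge_atTop R)).exists
  obtain ⟨r, hr, heq⟩ := isPreconnected_Ici.intermediate_value₂ ha hb
    (hu.continuousOn_Ici.mono hIci) (hv.continuousOn_Ici.mono hIci) huva hvub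
  exact hcross r hr heq

lemma eqOn_of_apply_zero_eq (hu : IsGroundState k f u) (hv : IsGroundState k f v)
    (hF : ∀ z > 0, HasDerivAt F (f z) z) (hlip : LocallyLipschitzOn (Ioi 0) f)
    (heq : u 0 = v 0) : EqOn u v (Ioi 0) := fun r hr => by
  refine hu.eq_of_tendsto_cauchyGap hv.toIsRadialSolution hlip le_rfl hr
    (hu.continuousOn_Ici.mono Icc_subset_Ici_self) (hv.continuousOn_Ici.mono Icc_subset_Ici_self)
    hu.pos_zero hv.pos_zero ?_
  have hlim := ((hu.tendsto_nhdsGT_zero.sub hv.tendsto_nhdsGT_zero).pow 2).add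
    (((hu.tendsto_deriv_nhdsGT_zero hF).sub (hv.tendsto_deriv_nhdsGT_zero hF)).pow 2)
  rwa [heq, sub_self, sub_self, zero_pow two_ne_zero, add_zero] at hlim

lemma apply_zero_le_of_forall_le (hu : IsGroundState k f u) (hv : IsGroundState k f v)
    (h : IsAdmissible f F β) (hvu : ∀ r > 0, v r ≤ u r) : u 0 ≤ v 0 := by
  by_contra! hlt
  have hmem : v 0 ∈ Ioo 0 (u 0) := ⟨hv.pos_zero, hlt⟩
  have hsteep : Tendsto (fun r => steepness u (v r)) (𝓝[>] 0) (𝓝 (steepness u (v 0))) :=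
    (hu.hasDerivAt_steepness h hmem).continuousAt.tendsto.comp hv.tendsto_nhdsGT_zero
  have hflat : Tendsto (fun r => -deriv v r) (𝓝[>] 0) (𝓝 0) := by
    simpa using (hv.tendsto_deriv_nhdsGT_zero h.hasDerivAt).neg
  refine (hu.steepness_pos h hmem).not_ge (le_of_tendsto_of_tendsto hsteep hflat ?_)
  filter_upwards [self_mem_nhdsWithin] with r hr
  rw [← hv.steepness_apply h hr]
  exact hu.steepness_le_steepness_of_le hv h hr (fun s hs => hvu s (hr.out.trans_le hs))
    (right_mem_Ioc.2 (hv.pos r hr))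

lemma exists_le_of_not_eqOn (hu : IsGroundState k f u) (hv : IsGroundState k f v)
    (h : IsAdmissible f F β) (hne : ¬ EqOn u v (Ioi 0)) : ∃ r > 0, u r ≤ v r := by
  by_contra! hvu
  refine hne (hu.eqOn_of_apply_zero_eq hv h.hasDerivAt h.locallyLipschitzOn (le_antisymm
    (hu.apply_zero_le_of_forall_le hv h fun r hr => (hvu r hr).le) ?_))
  exact le_of_tendsto_of_tendsto hv.tendsto_nhdsGT_zero hu.tendsto_nhdsGT_zero
    (eventually_nhdsWithin_of_forall fun r hr => (hvu r hr).le)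

lemma not_eventually_lt (hu : IsGroundState k f u) (hv : IsGroundState k f v)
    (h : IsAdmissible f F β) : ¬ ∀ᶠ r in atTop, v r < u r := fun hlt => by
  have hne : ¬ EqOn u v (Ioi 0) := fun heq => by
    obtain ⟨r, hvu, hr⟩ := (hlt.and (eventually_gt_atTop 0)).exists
    exact hvu.ne' (heq hr)
  obtain ⟨a, ha, hle⟩ := hu.exists_le_of_not_eqOn hv h hne
  obtain ⟨r, har, heq, hderiv, hvu⟩ := exists_last_crossing
    (fun s hs => hu.differentiableAt (ha.trans_le hs))
    (fun s hs => hv.differentiableAt (ha.trans_le hs)) hle hlt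
  have hr : 0 < r := ha.trans_le har
  refine hne (hu.eqOn_of_eq_of_deriv_eq hv.toIsRadialSolution h.locallyLipschitzOn hr heq
    (le_antisymm ?_ hderiv))
  rcases le_or_gt (v r) β with hβ | hβ
  · exact hu.deriv_le_deriv_of_crossing_le hv h hr heq hvu hβ
  · exact hu.deriv_le_deriv_of_lt_crossing hv h hr heq hβ

theorem eqOn (hu : IsGroundState k f u) (hv : IsGroundState k f v) (h : IsAdmissible f F β) :
    EqOn u v (Ici 0) := by
  have hIoi : EqOn u v (Ioi 0) := by
    by_contra hne
    exact (hu.eventually_lt_or_eventually_lt hv h hne).elim (hu.not_eventually_lt hv h)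
      (hv.not_eventually_lt hu h)
  exact hIoi.of_subset_closure hu.continuousOn_Ici hv.continuousOn_Ici Ioi_subset_Ici_self
    (closure_Ioi 0).ge

end IsGroundState

/-! ### The double power nonlinearity -/

section DoublePower

/-- The double power nonlinearity `-ω z + z ^ p - z ^ (2p - 1)` of problem (b), on `z > 0`. -/
noncomputable def doublePower (p ω z : ℝ) : ℝ := -ω * z + z ^ p - z ^ (2 * p - 1)

/-- The primitive of `doublePower p ω` which vanishes at `0`. -/
noncomputable def doublePowerPrimitive (p ω z : ℝ) : ℝ :=
  -ω * z ^ 2 / 2 + z ^ (p + 1) / (p + 1) - z ^ (2 * p) / (2 * p)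

variable {p ω x y z β : ℝ}

lemma rpow_two_mul_eq_mul_rpow_sub_one_sq (hz : 0 < z) (p : ℝ) :
    z ^ (2 * p) = z ^ 2 * (z ^ (p - 1)) ^ 2 := by
  have hsq : z ^ (2 * p) = (z ^ p) ^ 2 := by rw [mul_comm, ← Nat.cast_ofNat, rpow_mul_natCast hz.le]
  rw [rpow_sub_one hz.ne', hsq]
  field_simp

lemma doublePower_eq_mul (hz : 0 < z) :
    doublePower p ω z = z * (-ω + z ^ (p - 1) - (z ^ (p - 1)) ^ 2) := by
  rw [doublePower, rpow_sub_one hz.ne' (2 * p), rpow_two_mul_eq_mul_rpow_sub_one_sq hz,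
    rpow_sub_one hz.ne']
  field_simp

lemma doublePowerPrimitive_eq_mul (hz : 0 < z) :
    doublePowerPrimitive p ω z =
      z ^ 2 * (-ω / 2 + z ^ (p - 1) / (p + 1) - (z ^ (p - 1)) ^ 2 / (2 * p)) := by
  have hpow : z ^ (p + 1) = z ^ 2 * z ^ (p - 1) := by
    rw [rpow_sub_one hz.ne', rpow_add_one hz.ne']
    field_simp
  rw [doublePowerPrimitive, hpow, rpow_two_mul_eq_mul_rpow_sub_one_sq hz]
  ring

lemma doublePower_pos_iff (hz : 0 < z) :
    0 < doublePower p ω z ↔ 0 < -ω + z ^ (p - 1) - (z ^ (p - 1)) ^ 2 := by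
  rw [doublePower_eq_mul hz, mul_pos_iff_of_pos_left hz]

lemma doublePower_nonneg_iff (hz : 0 < z) :
    0 ≤ doublePower p ω z ↔ 0 ≤ -ω + z ^ (p - 1) - (z ^ (p - 1)) ^ 2 := by
  rw [doublePower_eq_mul hz, mul_nonneg_iff_of_pos_left hz]

lemma doublePowerPrimitive_nonneg_iff (hz : 0 < z) :
    0 ≤ doublePowerPrimitive p ω z ↔
      0 ≤ -ω / 2 + z ^ (p - 1) / (p + 1) - (z ^ (p - 1)) ^ 2 / (2 * p) := by
  rw [doublePowerPrimitive_eq_mul hz, mul_nonneg_iff_of_pos_left (pow_pos hz 2)]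

lemma hasDerivAt_doublePower (hz : 0 < z) :
    HasDerivAt (doublePower p ω)
      (-ω + p * z ^ (p - 1) - (2 * p - 1) * (z ^ (p - 1)) ^ 2) z := by
  have hpow : z ^ (2 * p - 1 - 1) = (z ^ (p - 1)) ^ 2 := by
    rw [← rpow_mul_natCast hz.le]
    ring_nf
  exact ((((hasDerivAt_id z).const_mul (-ω)).add (hasDerivAt_rpow_const (p := p)
    (.inl hz.ne'))).sub (hasDerivAt_rpow_const (p := 2 * p - 1) (.inl hz.ne'))).congr_deriv
    (by rw [hpow, mul_one])

lemma hasDerivAt_doublePowerPrimitive (hp : 0 < p) (hz : 0 < z) :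
    HasDerivAt (doublePowerPrimitive p ω) (doublePower p ω z) z := by
  refine (((((hasDerivAt_pow 2 z).const_mul (-ω)).div_const 2).add
    ((hasDerivAt_rpow_const (p := p + 1) (.inl hz.ne')).div_const (p + 1))).sub
    ((hasDerivAt_rpow_const (p := 2 * p) (.inl hz.ne')).div_const (2 * p))).congr_deriv ?_
  rw [doublePower, add_sub_cancel_right]
  field_simp
  push_cast
  ring

lemma locallyLipschitzOn_doublePower : LocallyLipschitzOn (Ioi 0) (doublePower p ω) := by
  refine ContDiffOn.locallyLipschitzOn (convex_Ioi 0) fun z hz => ?_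
  exact (((contDiffAt_const.mul contDiffAt_id).add (contDiffAt_rpow_const_of_ne hz.out.ne')).sub
    (contDiffAt_rpow_const_of_ne hz.out.ne')).contDiffWithinAt

lemma tendsto_doublePowerPrimitive (hp : 0 < p) :
    Tendsto (doublePowerPrimitive p ω) (𝓝[>] 0) (𝓝 0) := by
  have hcont : Continuous (doublePowerPrimitive p ω) :=
    (((continuous_pow 2).const_mul (-ω)).div_const 2 |>.add
      ((continuous_rpow_const (by positivity)).div_const _)).sub
      ((continuous_rpow_const (by positivity)).div_const _)
  have hzero : doublePowerPrimitive p ω 0 = 0 := by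
    simp [doublePowerPrimitive, zero_rpow (by positivity : p + 1 ≠ 0),
      zero_rpow (by positivity : 2 * p ≠ 0)]
  exact (hcont.tendsto' 0 0 hzero).mono_left nhdsWithin_le_nhds

lemma doublePower_pos_of_primitive_nonneg (hp : 1 < p) (hz : 0 < z)
    (hzp : z ^ (p - 1) < p / (p + 1)) (hF : 0 ≤ doublePowerPrimitive p ω z) :
    0 < doublePower p ω z := by
  rw [doublePowerPrimitive_nonneg_iff hz] at hF
  rw [doublePower_pos_iff hz]
  have ht : 0 < z ^ (p - 1) := rpow_pos_of_pos hz _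
  set t := z ^ (p - 1)
  have hgap : 0 < (p - 1) * t / (p * (p + 1)) * (p - t * (p + 1)) := by
    have := (lt_div_iff₀ (by positivity)).1 hzp
    have := sub_pos.2 hp
    have : 0 < p - t * (p + 1) := by linarith
    positivity
  calc 0 < 2 * (-ω / 2 + t / (p + 1) - t ^ 2 / (2 * p))
        + (p - 1) * t / (p * (p + 1)) * (p - t * (p + 1)) := by linarith
    _ = -ω + t - t ^ 2 := by field_simp; ring

lemma doublePower_pos_of_lt_of_nonneg (hp : 1 < p) (hx : 0 < x) (hxy : x < y)
    (hFx : 0 ≤ doublePowerPrimitive p ω x) (hfy : 0 ≤ doublePower p ω y) :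
    0 < doublePower p ω x := by
  rcases lt_or_ge (x ^ (p - 1)) (p / (p + 1)) with hsmall | hlarge
  · exact doublePower_pos_of_primitive_nonneg hp hx hsmall hFx
  · rw [doublePower_nonneg_iff (hx.trans hxy)] at hfy
    rw [doublePower_pos_iff hx]
    have hhalf : 1 / 2 < p / (p + 1) := by
      rw [div_lt_div_iff₀ two_pos (by linarith)]
      linarith
    have hlt : x ^ (p - 1) < y ^ (p - 1) := rpow_lt_rpow hx.le hxy (sub_pos.2 hp)
    nlinarith

lemma doublePower_pos_of_mem_Ioo (hp : 1 < p) (hx : 0 < x) (hfx : 0 < doublePower p ω x)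
    (hfy : 0 ≤ doublePower p ω y) (hz : z ∈ Ioo x y) : 0 < doublePower p ω z := by
  have hz0 : 0 < z := hx.trans hz.1
  rw [doublePower_pos_iff hx] at hfx
  rw [doublePower_nonneg_iff (hz0.trans hz.2)] at hfy
  rw [doublePower_pos_iff hz0]
  have hxz : x ^ (p - 1) < z ^ (p - 1) := rpow_lt_rpow hx.le hz.1 (sub_pos.2 hp)
  have hzy : z ^ (p - 1) < y ^ (p - 1) := rpow_lt_rpow hz0.le hz.2 (sub_pos.2 hp)
  set g : ℝ → ℝ := fun t => -ω + t - t ^ 2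
  refine pos_of_mul_pos_left (b := y ^ (p - 1) - x ^ (p - 1)) ?_ (by linarith)
  calc 0 < g (x ^ (p - 1)) * (y ^ (p - 1) - z ^ (p - 1)) :=
        mul_pos hfx (sub_pos.2 hzy)
    _ ≤ g (x ^ (p - 1)) * (y ^ (p - 1) - z ^ (p - 1))
        + g (y ^ (p - 1)) * (z ^ (p - 1) - x ^ (p - 1))
        + (z ^ (p - 1) - x ^ (p - 1)) * (y ^ (p - 1) - z ^ (p - 1))
          * (y ^ (p - 1) - x ^ (p - 1)) := by
        rw [add_assoc]
        refine le_add_of_nonneg_right (add_nonneg (mul_nonneg hfy (sub_pos.2 hxz).le) ?_)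
        exact mul_nonneg (mul_nonneg (sub_pos.2 hxz).le (sub_pos.2 hzy).le)
          (sub_pos.2 (hxz.trans hzy)).le
    _ = (-ω + z ^ (p - 1) - (z ^ (p - 1)) ^ 2) * (y ^ (p - 1) - x ^ (p - 1)) := by
        simp only [g]; ring

lemma doublePowerPrimitive_lt (hp : 1 < p) (hx : 0 < x) (hxy : x < y)
    (hfy : 0 ≤ doublePower p ω y) (hFy : 0 ≤ doublePowerPrimitive p ω y) :
    doublePowerPrimitive p ω x < doublePowerPrimitive p ω y := by
  rcases lt_or_ge (doublePowerPrimitive p ω x) 0 with hFx | hFx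
  · exact hFx.trans_le hFy
  have hfx := doublePower_pos_of_lt_of_nonneg hp hx hxy hFx hfy
  have hderiv (z : ℝ) (hz : z ∈ Icc x y) :=
    hasDerivAt_doublePowerPrimitive (ω := ω) (by linarith : 0 < p) (hx.trans_le hz.1)
  refine strictMonoOn_of_hasDerivWithinAt_pos (convex_Icc x y)
    (fun z hz => (hderiv z hz).continuousAt.continuousWithinAt)
    (fun z hz => (hderiv z (interior_subset hz)).hasDerivWithinAt) (fun z hz => ?_)
    (left_mem_Icc.2 hxy.le) (right_mem_Icc.2 hxy.le) hxy
  exact doublePower_pos_of_mem_Ioo hp hx hfx hfy (by simpa only [interior_Icc] using hz)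

lemma concaveOn_doublePower (hp : 1 < p) (hβ : 0 < β) (hpβ : p / (2 * (2 * p - 1)) ≤ β ^ (p - 1)) :
    ConcaveOn ℝ (Ici β) (doublePower p ω) := by
  have hderiv (z : ℝ) (hz : β ≤ z) := hasDerivAt_doublePower (p := p) (ω := ω) (hβ.trans_le hz)
  refine AntitoneOn.concaveOn_of_deriv (convex_Ici β)
    (fun z hz => (hderiv z hz).continuousAt.continuousWithinAt)
    (fun z hz => (hderiv z (interior_subset hz)).differentiableAt.differentiableWithinAt) ?_
  rw [interior_Ici]
  intro x hx y hy hxy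
  rw [(hderiv x hx.out.le).deriv, (hderiv y hy.out.le).deriv]
  have hβx : β ^ (p - 1) ≤ x ^ (p - 1) := rpow_le_rpow hβ.le hx.out.le (sub_pos.2 hp).le
  have hxy' : x ^ (p - 1) ≤ y ^ (p - 1) :=
    rpow_le_rpow (hβ.trans hx).le hxy (sub_pos.2 hp).le
  rw [div_le_iff₀ (by linarith)] at hpβ
  have hsum : p ≤ (2 * p - 1) * (x ^ (p - 1) + y ^ (p - 1)) :=
    hpβ.trans (by nlinarith)
  nlinarith

lemma exists_near_zero_doublePower (hp : 1 < p) (hω : 0 < ω) :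
    ∃ δ > 0, ∃ c > 0, AntitoneOn (doublePower p ω) (Ioo 0 δ) ∧ ∀ z ∈ Ioo 0 δ,
      doublePower p ω z ≤ 0 ∧ doublePowerPrimitive p ω z ≤ -(c * z) ^ 2 / 2 := by
  have hp0 : 0 < p := by linarith
  set δ := (ω / (2 * p)) ^ (p - 1)⁻¹
  have hsmall (z : ℝ) (hz : z ∈ Ioo 0 δ) : 0 < z ^ (p - 1) ∧ p * z ^ (p - 1) < ω / 2 := by
    have hlt : z ^ (p - 1) < ω / (2 * p) := by
      rw [← rpow_inv_rpow (by positivity : 0 ≤ ω / (2 * p)) (sub_pos.2 hp).ne']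
      exact rpow_lt_rpow hz.1.le hz.2 (sub_pos.2 hp)
    refine ⟨rpow_pos_of_pos hz.1 _, (mul_lt_mul_of_pos_left hlt hp0).trans_eq ?_⟩
    field_simp
  refine ⟨δ, by positivity, √(ω / 2), by positivity, ?_, fun z hz => ⟨?_, ?_⟩⟩
  · refine antitoneOn_of_hasDerivAt_nonpos (convex_Ioo 0 δ)
      (fun z hz => hasDerivAt_doublePower hz.1) fun z hz => ?_
    have hquad : 0 ≤ (2 * p - 1) * (z ^ (p - 1)) ^ 2 :=
      mul_nonneg (by linarith) (sq_nonneg _)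
    linarith [(hsmall z hz).2]
  · rw [doublePower_eq_mul hz.1]
    refine mul_nonpos_of_nonneg_of_nonpos hz.1.le ?_
    nlinarith [hsmall z hz, sq_nonneg (z ^ (p - 1))]
  · obtain ⟨hpos, hlt⟩ := hsmall z hz
    have hlin : z ^ (p - 1) / (p + 1) ≤ ω / 4 := by
      rw [div_le_iff₀ (by linarith)]
      nlinarith
    have hquad : 0 ≤ (z ^ (p - 1)) ^ 2 / (2 * p) := by positivity
    rw [doublePowerPrimitive_eq_mul hz.1, mul_pow, sq_sqrt (by positivity)]
    calc z ^ 2 * (-ω / 2 + z ^ (p - 1) / (p + 1) - (z ^ (p - 1)) ^ 2 / (2 * p))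
        ≤ z ^ 2 * (-ω / 4) := by gcongr; linarith
      _ = -(ω / 2 * z ^ 2) / 2 := by ring

lemma exists_root_of_mem_Ico (hp : 1 < p)
    (hω : ω ∈ Ico (p * (7 * p - 5) / (4 * (p + 1) * (2 * p - 1) ^ 2)) (p / (p + 1) ^ 2)) :
    ∃ t ∈ Ico (p / (2 * (2 * p - 1))) (p / (p + 1)),
      -ω / 2 + t / (p + 1) - t ^ 2 / (2 * p) = 0 := by
  have hq : 0 < 2 * p - 1 := by linarith
  set Q : ℝ → ℝ := fun t => -ω / 2 + t / (p + 1) - t ^ 2 / (2 * p)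
  have hleft : Q (p / (2 * (2 * p - 1))) =
      (p * (7 * p - 5) / (4 * (p + 1) * (2 * p - 1) ^ 2) - ω) / 2 := by
    simp only [Q]
    field_simp
    ring
  have hright : Q (p / (p + 1)) = (p / (p + 1) ^ 2 - ω) / 2 := by
    simp only [Q]
    field_simp
    ring
  have hle : p / (2 * (2 * p - 1)) ≤ p / (p + 1) := by
    gcongr
    linarith
  exact intermediate_value_Ico hle (by fun_prop : Continuous Q).continuousOn
    ⟨by linarith [hω.1], by linarith [hω.2]⟩

lemma doublePowerPrimitive_nonpos (hp : 1 < p) (hpβ : β ^ (p - 1) < p / (p + 1))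
    (hFβ : doublePowerPrimitive p ω β = 0) (hz : 0 < z) (hzβ : z ≤ β) :
    doublePowerPrimitive p ω z ≤ 0 := by
  have hβ : 0 < β := hz.trans_le hzβ
  have hle : z ^ (p - 1) ≤ β ^ (p - 1) := rpow_le_rpow hz.le hzβ (sub_pos.2 hp).le
  rw [doublePowerPrimitive_eq_mul hβ, mul_eq_zero_iff_left (pow_pos hβ 2).ne'] at hFβ
  rw [doublePowerPrimitive_eq_mul hz]
  set s := z ^ (p - 1)
  set t := β ^ (p - 1)
  have hchord : 0 ≤ 1 / (p + 1) - (s + t) / (2 * p) := by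
    have hpt := (lt_div_iff₀ (by linarith)).1 hpβ
    rw [sub_nonneg, div_le_div_iff₀ (by linarith) (by linarith)]
    nlinarith
  refine mul_nonpos_of_nonneg_of_nonpos (sq_nonneg z) ?_
  calc -ω / 2 + s / (p + 1) - s ^ 2 / (2 * p)
      = (-ω / 2 + t / (p + 1) - t ^ 2 / (2 * p))
        - (t - s) * (1 / (p + 1) - (s + t) / (2 * p)) := by field_simp; ring
    _ ≤ 0 := by linarith [mul_nonneg (sub_nonneg.2 hle) hchord]

/- The bounds on `ω` say precisely that the smaller positive zero `β` of the primitive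
satisfies `p / (2 * (2 * p - 1)) ≤ β ^ (p - 1) < p / (p + 1)`. -/
theorem exists_isAdmissible_doublePower (hp : 1 < p)
    (hω : ω ∈ Ico (p * (7 * p - 5) / (4 * (p + 1) * (2 * p - 1) ^ 2)) (p / (p + 1) ^ 2)) :
    ∃ β, IsAdmissible (doublePower p ω) (doublePowerPrimitive p ω) β := by
  have hp0 : 0 < p := by linarith
  have hω0 : 0 < ω := by
    have h7 : 0 < 7 * p - 5 := by linarith
    have h2 : 0 < 2 * p - 1 := by linarith
    exact lt_of_lt_of_le (by positivity) hω.1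
  obtain ⟨t, ht, hroot⟩ := exists_root_of_mem_Ico hp hω
  have ht0 : 0 < t := lt_of_lt_of_le (div_pos hp0 (by linarith)) ht.1
  set β := t ^ (p - 1)⁻¹
  have hβ : 0 < β := rpow_pos_of_pos ht0 _
  have hβt : β ^ (p - 1) = t := rpow_inv_rpow ht0.le (sub_pos.2 hp).ne'
  have hFβ : doublePowerPrimitive p ω β = 0 := by
    rw [doublePowerPrimitive_eq_mul hβ, hβt, hroot, mul_zero]
  have hfβ : 0 < doublePower p ω β :=
    doublePower_pos_of_primitive_nonneg hp hβ (hβt ▸ ht.2) hFβ.ge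
  exact ⟨β, {
    hasDerivAt := fun _ => hasDerivAt_doublePowerPrimitive hp0
    tendsto_zero := tendsto_doublePowerPrimitive hp0
    locallyLipschitzOn := locallyLipschitzOn_doublePower
    nonpos_of_le := fun _ => doublePowerPrimitive_nonpos hp (hβt ▸ ht.2) hFβ
    antitoneOn_div :=
      antitoneOn_div_sub_of_concaveOn (concaveOn_doublePower hp hβ (hβt ▸ ht.1)) hfβ.le
    lt_of_nonneg := fun _ hx _ hxy => doublePowerPrimitive_lt hp hx hxy
    exists_near_zero := exists_near_zero_doublePower hp hω0 }⟩

end DoublePower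

lemma IsPositiveSolution.isGroundState {n : ℕ} (hn : 0 < n) {p ω : ℝ} {u : ℝ → ℝ}
    (h : IsPositiveSolution n p ω u) : IsGroundState (n - 1) (doublePower p ω) u := by
  obtain ⟨-, hdiff, hode, hzero, hpos, hlim⟩ := h
  refine ⟨⟨fun r hr => hpos r hr.le, fun r hr => (hdiff r hr).1.hasDerivAt, fun r hr => ?_⟩,
    hpos 0 le_rfl, hzero, hlim⟩
  refine (hdiff r hr).2.hasDerivAt.congr_deriv ?_
  rw [Nat.cast_pred hn, doublePower]
  linarith [hode r hr]

/-- For `p > 1` and `a_p ≤ ω < ω_p`, problem (b) has at most one positive solution. -/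
theorem uniqueness_of_positive_solution (n : ℕ) (hn : 0 < n) (p ω : ℝ) (hp : 1 < p)
    (hω₁ : p * (7 * p - 5) / (4 * (p + 1) * (2 * p - 1) ^ 2) ≤ ω)
    (hω₂ : ω < p / (p + 1) ^ 2)
    (u₁ u₂ : ℝ → ℝ)
    (h₁ : IsPositiveSolution n p ω u₁) (h₂ : IsPositiveSolution n p ω u₂) :
    Set.EqOn u₁ u₂ (Set.Ici 0) := by
  obtain ⟨β, hβ⟩ := exists_isAdmissible_doublePower hp ⟨hω₁, hω₂⟩
  exact (h₁.isGroundState hn).eqOn (h₂.isGroundState hn) hβ
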